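/- arXiv:1312.3735 — 10 statements merged into one kernel-verified Lean document; each statement's English description precedes it below -/
import Mathlib

section
/- Let 𝒳 be a finite nonempty set, let P be a probability mass function on 𝒳, and let ρ > 0. Then for every positive integer M and every function f : 𝒳 → {1,…,M}, the ρ-th moment of the number of performed tasks satisfies Σ_{x∈𝒳} P(x)·|f⁻¹(f(x))|^ρ ≥ 2^{ρ·(H_{1/(1+ρ)}(P) − log₂ M)}. -/
/-!
Write `n x` for the size of the fibre of `f` through `x`. Each nonempty fibre contributes exactly
`1` to `∑ x, (n x)⁻¹`, so this sum is at most `M`. Hölder's inequality with the weights `(n x)⁻¹`,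
applied to `P x ^ (1 / (1 + ρ)) = (n x)⁻¹ * (n x * P x ^ (1 / (1 + ρ)))`, then bounds
`(∑ x, P x ^ (1 / (1 + ρ))) ^ (1 + ρ)`, which is `2 ^ (ρ * H)`, by `M ^ ρ * ∑ x, P x * n x ^ ρ`.
-/

open Filter Real

/-- The Rényi entropy of order `1/(1+ρ)` (base-2 logarithm) of a PMF `P`. -/
noncomputable def renyiEnt {Y : Type*} [Fintype Y] (ρ : ℝ) (P : Y → ℝ) : ℝ :=
  ((1 + ρ) / ρ) * Real.logb 2 (∑ y, P y ^ ((1 : ℝ) / (1 + ρ)))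

open scoped Finset

theorem sum_inv_card_fiber {X ι K : Type*} [DecidableEq ι] [DivisionSemiring K] [CharZero K]
    (s : Finset X) (f : X → ι) :
    ∑ x ∈ s, (#{y ∈ s | f y = f x} : K)⁻¹ = #(s.image f) := by
  rw [Finset.sum_comp (fun i ↦ (#{y ∈ s | f y = i} : K)⁻¹) f, Finset.card_eq_sum_ones,
    Nat.cast_sum]
  refine Finset.sum_congr rfl fun i hi ↦ ?_
  have hfiber : (#{y ∈ s | f y = i} : K) ≠ 0 :=
    Nat.cast_ne_zero.2 ((Finset.fiber_card_ne_zero_iff_mem_image s f i).2 hi)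
  rw [nsmul_eq_mul, mul_inv_cancel₀ hfiber, Nat.cast_one]

theorem sum_mul_rpow_le_rpow_sum_mul_sum_mul_rpow {X : Type*} (s : Finset X) {p : ℝ} (hp : 1 ≤ p)
    {w a : X → ℝ} (hw : ∀ x, 0 ≤ w x) (ha : ∀ x, 0 ≤ a x) :
    (∑ x ∈ s, w x * a x) ^ p ≤ (∑ x ∈ s, w x) ^ (p - 1) * ∑ x ∈ s, w x * a x ^ p := by
  have hp0 : 0 < p := by linarith
  have hW : 0 ≤ ∑ x ∈ s, w x := Finset.sum_nonneg fun x _ ↦ hw x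
  have hA : 0 ≤ ∑ x ∈ s, w x * a x ^ p :=
    Finset.sum_nonneg fun x _ ↦ mul_nonneg (hw x) (rpow_nonneg (ha x) p)
  have hwa : 0 ≤ ∑ x ∈ s, w x * a x := Finset.sum_nonneg fun x _ ↦ mul_nonneg (hw x) (ha x)
  calc (∑ x ∈ s, w x * a x) ^ p
      ≤ ((∑ x ∈ s, w x) ^ (1 - p⁻¹) * (∑ x ∈ s, w x * a x ^ p) ^ p⁻¹) ^ p := by
        gcongr
        exact inner_le_weight_mul_Lp_of_nonneg s hp w a hw ha
    _ = (∑ x ∈ s, w x) ^ (p - 1) * ∑ x ∈ s, w x * a x ^ p := by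
        rw [mul_rpow (rpow_nonneg hW _) (rpow_nonneg hA _), ← rpow_mul hW,
          rpow_inv_rpow hA hp0.ne', sub_mul, one_mul, inv_mul_cancel₀ hp0.ne']

theorem sum_rpow_rpow_le_card_image_rpow_mul_sum {X ι : Type*} [DecidableEq ι] (s : Finset X)
    (f : X → ι) {P : X → ℝ} (hP : ∀ x, 0 ≤ P x) {ρ : ℝ} (hρ : 0 ≤ ρ) :
    (∑ x ∈ s, P x ^ (1 / (1 + ρ))) ^ (1 + ρ) ≤
      (#(s.image f) : ℝ) ^ ρ * ∑ x ∈ s, P x * (#{y ∈ s | f y = f x} : ℝ) ^ ρ := by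
  set n : X → ℝ := fun x ↦ #{y ∈ s | f y = f x}
  have hn (x) (hx : x ∈ s) : 0 < n x :=
    Nat.cast_pos.2 (Finset.card_pos.2 ⟨x, Finset.mem_filter.2 ⟨hx, rfl⟩⟩)
  have hweight (x) (hx : x ∈ s) :
      (n x)⁻¹ * (n x * P x ^ (1 / (1 + ρ))) = P x ^ (1 / (1 + ρ)) :=
    inv_mul_cancel_left₀ (hn x hx).ne' _
  have hmoment (x) (hx : x ∈ s) :
      (n x)⁻¹ * (n x * P x ^ (1 / (1 + ρ))) ^ (1 + ρ) = P x * n x ^ ρ := by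
    rw [mul_rpow (hn x hx).le (rpow_nonneg (hP x) _), one_div,
      rpow_inv_rpow (hP x) (by positivity), rpow_one_add' (hn x hx).le (by positivity), mul_assoc,
      inv_mul_cancel_left₀ (hn x hx).ne', mul_comm]
  have holder := sum_mul_rpow_le_rpow_sum_mul_sum_mul_rpow s (le_add_of_nonneg_right hρ)
    (w := fun x ↦ (n x)⁻¹) (a := fun x ↦ n x * P x ^ (1 / (1 + ρ))) (fun x ↦ by positivity)
    (fun x ↦ mul_nonneg (Nat.cast_nonneg _) (rpow_nonneg (hP x) _))
  rwa [Finset.sum_congr rfl hweight, Finset.sum_congr rfl hmoment, sum_inv_card_fiber,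
    add_sub_cancel_left] at holder

theorem two_rpow_mul_renyiEnt {X : Type*} [Fintype X] {ρ : ℝ} (hρ : ρ ≠ 0) {P : X → ℝ}
    (hP : 0 < ∑ x, P x ^ (1 / (1 + ρ))) :
    (2 : ℝ) ^ (ρ * renyiEnt ρ P) = (∑ x, P x ^ (1 / (1 + ρ))) ^ (1 + ρ) := by
  rw [renyiEnt, ← mul_assoc, mul_div_cancel₀ _ hρ, mul_comm, rpow_mul two_pos.le,
    rpow_logb two_pos (by norm_num) hP]

theorem tasks_lower_bound_general {X ι : Type*} [Fintype X] [DecidableEq ι]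
    {P : X → ℝ} (hP : ∀ x, 0 ≤ P x) (hP_ne : P ≠ 0) {ρ : ℝ} (hρ : 0 < ρ)
    {f : X → ι} {M : ℕ} (hM : #(Finset.univ.image f) ≤ M) :
    (2 : ℝ) ^ (ρ * (renyiEnt ρ P - Real.logb 2 M)) ≤
      ∑ x, P x * (#{y | f y = f x} : ℝ) ^ ρ := by
  obtain ⟨x₀, hx₀⟩ := Function.ne_iff.1 hP_ne
  have himage : 0 < #(Finset.univ.image f) :=
    Finset.card_pos.2 ⟨f x₀, Finset.mem_image_of_mem f (Finset.mem_univ x₀)⟩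
  have hM0 : (0 : ℝ) < M := Nat.cast_pos.2 (himage.trans_le hM)
  have hsum : 0 < ∑ x, P x ^ (1 / (1 + ρ)) :=
    Finset.sum_pos' (fun x _ ↦ rpow_nonneg (hP x) _)
      ⟨x₀, Finset.mem_univ x₀, rpow_pos_of_pos ((hP x₀).lt_of_ne' hx₀) _⟩
  have hlogM : (2 : ℝ) ^ (ρ * Real.logb 2 M) = (M : ℝ) ^ ρ := by
    rw [mul_comm, rpow_mul two_pos.le, rpow_logb two_pos (by norm_num) hM0]
  rw [mul_sub, rpow_sub two_pos, two_rpow_mul_renyiEnt hρ.ne' hsum, hlogM,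
    div_le_iff₀' (rpow_pos_of_pos hM0 ρ)]
  calc (∑ x, P x ^ (1 / (1 + ρ))) ^ (1 + ρ)
      ≤ (#(Finset.univ.image f) : ℝ) ^ ρ * ∑ x, P x * (#{y | f y = f x} : ℝ) ^ ρ :=
        sum_rpow_rpow_le_card_image_rpow_mul_sum Finset.univ f hP hρ.le
    _ ≤ (M : ℝ) ^ ρ * ∑ x, P x * (#{y | f y = f x} : ℝ) ^ ρ := by
        have hmoment : 0 ≤ ∑ x, P x * (#{y | f y = f x} : ℝ) ^ ρ :=
          Finset.sum_nonneg fun x _ ↦ mul_nonneg (hP x) (by positivity)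
        gcongr

/-- lower bound on the ρ-th moment of the number of performed tasks. -/
theorem tasks_lower_bound {X : Type*} [Fintype X] [Nonempty X]
    (P : X → ℝ) (hP0 : ∀ x, 0 ≤ P x) (hP1 : ∑ x, P x = 1)
    (ρ : ℝ) (hρ : 0 < ρ) (M : ℕ) (hM : 0 < M) (f : X → Fin M) :
    (2 : ℝ) ^ (ρ * (renyiEnt ρ P - Real.logb 2 (M : ℝ))) ≤
      ∑ x, P x * ((Finset.univ.filter fun y => f y = f x).card : ℝ) ^ ρ := by
  have hP_ne : P ≠ 0 := by rintro rfl; simp at hP1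
  exact tasks_lower_bound_general hP0 hP_ne hρ (card_finset_fin_le _)
end

section
/- Let 𝒳 be a finite nonempty set, let P be a probability mass function on 𝒳, and let ρ > 0. Then for every integer M with M > log₂|𝒳| + 2 there exists a function f : 𝒳 → {1,…,M} such that Σ_{x∈𝒳} P(x)·|f⁻¹(f(x))|^ρ < 1 + 2^{ρ·(H_{1/(1+ρ)}(P) − log₂ M̃)}, where M̃ = (M − log₂|𝒳| − 2)/4. -/
/-!
Give `x` a weight `v x ≥ 0` and round the cell size `1 / v x` down to a power `b ^ i`, truncated at
the first power `b ^ K ≥ |X|`. Cutting the level of each `i < K` into cells of size at most `b ^ i`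
costs at most `|level i| / b ^ i + 1` cells, and one cell suffices for the top level. Since
`1 / b ^ i < b * v x` on level `i < K`, fewer than `b * ∑ v + log_b |X| + 2` cells are used, and the
cell of `x` has at most `max 1 (1 / v x)` elements. Taking `v` proportional to `P ^ (1 / (1 + ρ))`,
with the constant dictated by the number `M` of available cells, balances the `ρ`-th moment.
Rounding to powers of `b = 2` gives the claim even with `2` in place of the constant `4`.
-/

open Filter Real

section Cells

variable {X ι : Type*} [Fintype X]

theorem exists_fin_map_card_fiber_le_of_card_le_mul {n m : ℕ} (h : Fintype.card X ≤ n * m) :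
    ∃ f : X → Fin n, ∀ i, (Finset.univ.filter fun x => f x = i).card ≤ m := by
  obtain ⟨e⟩ : Nonempty (X ↪ Fin n × Fin m) :=
    Function.Embedding.nonempty_of_card_le (by simpa using h)
  refine ⟨fun x => (e x).1, fun i => ?_⟩
  have hinj : Set.InjOn (fun x => (e x).2) (Finset.univ.filter fun x => (e x).1 = i) := by
    intro x hx y hy hxy
    simp only [Finset.coe_filter, Finset.mem_univ, true_and, Set.mem_ofPred_eq] at hx hy
    exact e.injective (Prod.ext (hx.trans hy.symm) hxy)
  simpa using Finset.card_le_card_of_injOn _ (fun _ _ => Finset.mem_univ _) hinj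

theorem exists_fin_map_card_fiber_le_of_levels [DecidableEq ι] {I : Finset ι} {k : X → ι}
    {n m : ι → ℕ} {M : ℕ} (hk : ∀ x, k x ∈ I)
    (hcard : ∀ i, (Finset.univ.filter fun x => k x = i).card ≤ n i * m i)
    (hM : ∑ i ∈ I, n i ≤ M) :
    ∃ f : X → Fin M, ∀ x, (Finset.univ.filter fun y => f y = f x).card ≤ m (k x) := by
  classical
  choose cell hcell using fun i =>
    exists_fin_map_card_fiber_le_of_card_le_mul (X := {x // k x = i})
      ((Fintype.card_subtype _).trans_le (hcard i))
  let cells : Finset (Σ i, Fin (n i)) := I.sigma fun _ => Finset.univ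
  obtain ⟨e⟩ : Nonempty (cells ↪ Fin M) :=
    Function.Embedding.nonempty_of_card_le (by simpa [cells] using hM)
  let g : X → Σ i, Fin (n i) := fun x => ⟨k x, cell (k x) ⟨x, rfl⟩⟩
  have hg : ∀ x, g x ∈ cells := fun x => by simp [cells, g, hk x]
  refine ⟨fun x => e ⟨g x, hg x⟩, fun x => ?_⟩
  refine le_trans (Finset.card_le_card fun y hy => ?_)
    ((Finset.card_map (Function.Embedding.subtype _)).trans_le
      (hcell (k x) (cell (k x) ⟨x, rfl⟩)))
  have hgy : g y = g x := by simpa using hy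
  obtain ⟨hky, hcy⟩ := Sigma.mk.inj hgy
  have hcell_eq : ∀ i (hi : k y = i) (c : Fin (n i)),
      cell (k y) ⟨y, rfl⟩ ≍ c → cell i ⟨y, hi⟩ = c := by
    rintro _ rfl _ h
    exact eq_of_heq h
  simpa using ⟨hky, hcell_eq _ hky _ hcy⟩

end Cells

/-- The level of a point of weight `t`: the largest `i ≤ K` for which cells of size `b ^ i` do not
exceed `1 / t`. A point of weight `0` has the top level `K`, and a point of weight greater than `1`
has level `0`. -/
noncomputable def cellLevel (b : ℝ) (K : ℕ) (t : ℝ) : ℕ :=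
  Nat.findGreatest (fun i => b ^ i * t ≤ 1) K

section CellLevel

variable {b : ℝ} {K : ℕ} {t : ℝ}

theorem cellLevel_le : cellLevel b K t ≤ K :=
  Nat.findGreatest_le K

theorem pow_cellLevel_mul_le_max : b ^ cellLevel b K t * t ≤ max 1 t := by
  rcases eq_or_ne (cellLevel b K t) 0 with h | h
  · simp [h]
  · exact (Nat.findGreatest_of_ne_zero rfl h).trans (le_max_left 1 t)

theorem one_lt_pow_cellLevel_succ_mul (h : cellLevel b K t < K) :
    1 < b ^ (cellLevel b K t + 1) * t :=
  not_le.1 (Nat.findGreatest_is_greatest (Nat.lt_succ_self _) h)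

variable {X : Type*} [Fintype X] {v : X → ℝ}

theorem sum_card_cellLevel_div_pow_le (hb : 0 < b) (hv : ∀ x, 0 ≤ v x) :
    ∑ i ∈ Finset.range K,
        ((Finset.univ.filter fun x => cellLevel b K (v x) = i).card : ℝ) / b ^ i ≤
      b * ∑ x, v x := by
  have hlevel : ∀ i ∈ Finset.range K,
      ((Finset.univ.filter fun x => cellLevel b K (v x) = i).card : ℝ) / b ^ i ≤
        ∑ x with cellLevel b K (v x) = i, b * v x := by
    intro i hi
    rw [div_eq_mul_inv, ← nsmul_eq_mul]
    refine Finset.card_nsmul_le_sum _ _ _ fun x hx => ?_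
    obtain rfl := (Finset.mem_filter.1 hx).2
    have h := one_lt_pow_cellLevel_succ_mul (Finset.mem_range.1 hi)
    rw [inv_le_iff_one_le_mul₀' (by positivity), ← mul_assoc, ← pow_succ]
    exact h.le
  calc
    _ ≤ ∑ i ∈ Finset.range K, ∑ x with cellLevel b K (v x) = i, b * v x :=
      Finset.sum_le_sum hlevel
    _ ≤ ∑ x, b * v x :=
      Finset.sum_fiberwise_le_sum_of_sum_fiber_nonneg fun _ _ =>
        Finset.sum_nonneg fun x _ => mul_nonneg hb.le (hv x)
    _ = b * ∑ x, v x := (Finset.mul_sum ..).symm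

theorem sum_ceil_card_cellLevel_div_pow_le (hb : 0 < b) (hv : ∀ x, 0 ≤ v x)
    (hK : (Fintype.card X : ℝ) ≤ b ^ K) :
    ∑ i ∈ Finset.range (K + 1),
        (⌈((Finset.univ.filter fun x => cellLevel b K (v x) = i).card : ℝ) / b ^ i⌉₊ : ℝ) ≤
      b * ∑ x, v x + K + 1 := by
  let c : ℕ → ℝ := fun i => (Finset.univ.filter fun x => cellLevel b K (v x) = i).card
  have hbelow : ∑ i ∈ Finset.range K, (⌈c i / b ^ i⌉₊ : ℝ) ≤ b * ∑ x, v x + K := calc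
    _ ≤ ∑ i ∈ Finset.range K, (c i / b ^ i + 1) :=
      Finset.sum_le_sum fun i _ => (Nat.ceil_lt_add_one (by positivity)).le
    _ ≤ b * ∑ x, v x + K := by
      simpa [Finset.sum_add_distrib] using sum_card_cellLevel_div_pow_le hb hv
  have htop : (⌈c K / b ^ K⌉₊ : ℝ) ≤ 1 := by
    rw [Nat.cast_le_one, Nat.ceil_le, Nat.cast_one, div_le_one (by positivity)]
    exact (Nat.cast_le.2 (Finset.card_le_univ _)).trans hK
  rw [Finset.sum_range_succ]
  exact add_le_add hbelow htop

end CellLevel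

theorem natCast_clog_lt_logb_add_one (b n : ℕ) :
    (Nat.clog b n : ℝ) < logb b n + 1 := by
  rw [← natCeil_logb_natCast]
  exact Nat.ceil_lt_add_one (div_nonneg (log_natCast_nonneg n) (log_natCast_nonneg b))

section Moments

variable {X : Type*} [Fintype X] {b M : ℕ}

theorem exists_fin_map_mul_card_fiber_le_max {v : X → ℝ} (hv : ∀ x, 0 ≤ v x) (hb : 1 < b)
    (hM : b * ∑ x, v x + logb b (Fintype.card X) + 2 ≤ M) :
    ∃ f : X → Fin M, ∀ x,
      v x * ((Finset.univ.filter fun y => f y = f x).card : ℝ) ≤ max 1 (v x) := by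
  have hb0 : (0 : ℝ) < b := by positivity
  let K := Nat.clog b (Fintype.card X)
  let k : X → ℕ := fun x => cellLevel b K (v x)
  let level : ℕ → Finset X := fun i => Finset.univ.filter fun x => k x = i
  let n : ℕ → ℕ := fun i => ⌈((level i).card : ℝ) / b ^ i⌉₊
  have hcard : ∀ i, (level i).card ≤ n i * b ^ i := fun i => by
    have h : ((level i).card : ℝ) ≤ n i * (b : ℝ) ^ i :=
      (div_le_iff₀ (by positivity)).1 (Nat.le_ceil _)
    exact_mod_cast h
  have hn : ∑ i ∈ Finset.range (K + 1), n i ≤ M := by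
    have hK : (Fintype.card X : ℝ) ≤ (b : ℝ) ^ K := by exact_mod_cast Nat.le_pow_clog hb _
    have hsum := sum_ceil_card_cellLevel_div_pow_le hb0 hv hK
    have hlog := natCast_clog_lt_logb_add_one b (Fintype.card X)
    rw [← Nat.cast_le (α := ℝ), Nat.cast_sum]
    linarith
  obtain ⟨f, hf⟩ := exists_fin_map_card_fiber_le_of_levels (k := k)
    (fun _ => Finset.mem_range_succ_iff.2 cellLevel_le) hcard hn
  refine ⟨f, fun x => ?_⟩
  calc
    _ ≤ v x * (b : ℝ) ^ k x := mul_le_mul_of_nonneg_left (by exact_mod_cast hf x) (hv x)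
    _ = (b : ℝ) ^ k x * v x := mul_comm _ _
    _ ≤ max 1 (v x) := pow_cellLevel_mul_le_max

theorem rpow_one_add_mul_rpow_lt {w c β ρ : ℝ} (hw : 0 < w) (hc : 0 ≤ c) (hβ : 0 < β)
    (hρ : 0 ≤ ρ) (h : w * c ≤ max β w) :
    w ^ (1 + ρ) * c ^ ρ < w ^ (1 + ρ) + β ^ ρ * w := by
  have hmax : max β w ^ ρ < w ^ ρ + β ^ ρ := by
    have := rpow_pos_of_pos hw ρ
    have := rpow_pos_of_pos hβ ρ
    rcases max_choice β w with hmax | hmax <;> rw [hmax] <;> linarith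
  calc
    w ^ (1 + ρ) * c ^ ρ = w * (w * c) ^ ρ := by
      rw [rpow_add hw, rpow_one, mul_rpow hw.le hc, mul_assoc]
    _ ≤ w * max β w ^ ρ := by gcongr
    _ < w * (w ^ ρ + β ^ ρ) := by gcongr
    _ = w ^ (1 + ρ) + β ^ ρ * w := by rw [rpow_add hw, rpow_one]; ring

theorem exists_fin_map_sum_mul_card_fiber_rpow_lt {w : X → ℝ} {ρ : ℝ} (hw : ∀ x, 0 ≤ w x)
    (hS : 0 < ∑ x, w x) (hρ : 0 ≤ ρ) (hb : 1 < b) (hM : logb b (Fintype.card X) + 2 < M) :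
    ∃ f : X → Fin M,
      ∑ x, w x ^ (1 + ρ) * ((Finset.univ.filter fun y => f y = f x).card : ℝ) ^ ρ <
        ∑ x, w x ^ (1 + ρ) +
          ((∑ x, w x) / ((M - logb b (Fintype.card X) - 2) / b)) ^ ρ * ∑ x, w x := by
  have hD : 0 < M - logb b (Fintype.card X) - 2 := by linarith
  set S := ∑ x, w x with hS_def
  set β := S / ((M - logb b (Fintype.card X) - 2) / b) with hβ_def
  have hβ : 0 < β := by positivity
  have hbudget : b * ∑ x, w x / β + logb b (Fintype.card X) + 2 ≤ M := by
    have : b * (S / β) = M - logb b (Fintype.card X) - 2 := by rw [hβ_def]; field_simp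
    rw [← Finset.sum_div, ← hS_def]
    linarith
  obtain ⟨f, hf⟩ :=
    exists_fin_map_mul_card_fiber_le_max (fun x => div_nonneg (hw x) hβ.le) hb hbudget
  have hcell : ∀ x, w x * ((Finset.univ.filter fun y => f y = f x).card : ℝ) ≤ max β (w x) :=
    fun x => by
      have := mul_le_mul_of_nonneg_left (hf x) hβ.le
      rwa [mul_max_of_nonneg _ _ hβ.le, ← mul_assoc, mul_div_cancel₀ _ hβ.ne', mul_one] at this
  have hlt : ∀ x, 0 < w x →
      w x ^ (1 + ρ) * ((Finset.univ.filter fun y => f y = f x).card : ℝ) ^ ρ <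
        w x ^ (1 + ρ) + β ^ ρ * w x :=
    fun x hx => rpow_one_add_mul_rpow_lt hx (Nat.cast_nonneg _) hβ hρ (hcell x)
  obtain ⟨x₀, -, hx₀⟩ : ∃ x ∈ Finset.univ, 0 < w x :=
    (Finset.sum_pos_iff_of_nonneg fun x _ => hw x).1 hS
  refine ⟨f, ?_⟩
  rw [hS_def, Finset.mul_sum, ← Finset.sum_add_distrib]
  refine Finset.sum_lt_sum (fun x _ => ?_) ⟨x₀, Finset.mem_univ _, hlt x₀ hx₀⟩
  rcases (hw x).eq_or_lt with hx | hx
  · simp [← hx, zero_rpow (by positivity : 1 + ρ ≠ 0)]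
  · exact (hlt x hx).le

end Moments

theorem two_rpow_mul_renyiEnt_sub_logb {Y : Type*} [Fintype Y] {ρ t : ℝ} {P : Y → ℝ} (hρ : ρ ≠ 0)
    (ht : 0 < t) (hS : 0 < ∑ y, P y ^ ((1 : ℝ) / (1 + ρ))) :
    (2 : ℝ) ^ (ρ * (renyiEnt ρ P - logb 2 t)) =
      ((∑ y, P y ^ ((1 : ℝ) / (1 + ρ))) / t) ^ ρ * ∑ y, P y ^ ((1 : ℝ) / (1 + ρ)) := by
  rw [renyiEnt]
  set S := ∑ y, P y ^ ((1 : ℝ) / (1 + ρ))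
  have hexp : ρ * ((1 + ρ) / ρ * logb 2 S - logb 2 t) = logb 2 (S / t) * ρ + logb 2 S := by
    rw [logb_div hS.ne' ht.ne']
    field_simp
    ring
  rw [hexp, rpow_add two_pos, rpow_mul two_pos.le,
    rpow_logb two_pos (by norm_num) (div_pos hS ht), rpow_logb two_pos (by norm_num) hS]

theorem tasks_upper_bound_general {X : Type*} [Fintype X]
    (P : X → ℝ) (hP0 : ∀ x, 0 ≤ P x) (hP1 : ∑ x, P x = 1) (ρ : ℝ) (hρ : 0 < ρ)
    (b : ℕ) (hb : 1 < b) (M : ℕ) (hM : logb b (Fintype.card X : ℝ) + 2 < (M : ℝ)) :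
    ∃ f : X → Fin M,
      ∑ x, P x * ((Finset.univ.filter fun y => f y = f x).card : ℝ) ^ ρ <
        1 + (2 : ℝ) ^ (ρ * (renyiEnt ρ P -
          logb 2 (((M : ℝ) - logb b (Fintype.card X : ℝ) - 2) / b))) := by
  have hw0 : ∀ x, 0 ≤ P x ^ ((1 : ℝ) / (1 + ρ)) := fun x => rpow_nonneg (hP0 x) _
  have hwP : ∀ x, (P x ^ ((1 : ℝ) / (1 + ρ))) ^ (1 + ρ) = P x := fun x => by
    rw [one_div, rpow_inv_rpow (hP0 x) (by positivity)]
  have hS : 0 < ∑ x, P x ^ ((1 : ℝ) / (1 + ρ)) := by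
    obtain ⟨x, -, hx⟩ := Finset.exists_ne_zero_of_sum_ne_zero (hP1.trans_ne one_ne_zero)
    exact Finset.sum_pos' (fun x _ => hw0 x)
      ⟨x, Finset.mem_univ x, rpow_pos_of_pos ((hP0 x).lt_of_ne' hx) _⟩
  have hMt : 0 < ((M : ℝ) - logb b (Fintype.card X : ℝ) - 2) / b :=
    div_pos (by linarith) (by positivity)
  obtain ⟨f, hf⟩ := exists_fin_map_sum_mul_card_fiber_rpow_lt hw0 hS hρ.le hb hM
  refine ⟨f, ?_⟩
  rw [two_rpow_mul_renyiEnt_sub_logb hρ.ne' hMt hS]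
  simpa only [hwP, hP1] using hf

/-- achievability (direct part) of the one-shot bound. -/
theorem tasks_upper_bound {X : Type*} [Fintype X] [Nonempty X]
    (P : X → ℝ) (hP0 : ∀ x, 0 ≤ P x) (hP1 : ∑ x, P x = 1)
    (ρ : ℝ) (hρ : 0 < ρ) (M : ℕ) (hM : Real.logb 2 (Fintype.card X : ℝ) + 2 < (M : ℝ)) :
    ∃ f : X → Fin M,
      ∑ x, P x * ((Finset.univ.filter fun y => f y = f x).card : ℝ) ^ ρ <
        1 + (2 : ℝ) ^ (ρ * (renyiEnt ρ P -
          Real.logb 2 (((M : ℝ) - Real.logb 2 (Fintype.card X : ℝ) - 2) / 4))) := by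
  obtain ⟨f, hf⟩ := tasks_upper_bound_general P hP0 hP1 ρ hρ 2 one_lt_two M (by exact_mod_cast hM)
  refine ⟨f, hf.trans_le ?_⟩
  have hD : 0 < (M : ℝ) - Real.logb 2 (Fintype.card X : ℝ) - 2 := by linarith
  push_cast
  gcongr <;> norm_num
end

section
/- Let 𝒳 be a finite nonempty set, let ρ > 0, and let (Pₙ)_{n≥1} be a sequence where Pₙ is a probability mass function on 𝒳ⁿ (the law of the first n symbols X₁,…,Xₙ of a source with alphabet 𝒳). If R > limsup_{n→∞} H_{1/(1+ρ)}(Pₙ)/n, then there exist functions fₙ : 𝒳ⁿ → {1,…,⌊2^{nR}⌋} such that lim_{n→∞} Σ_{xⁿ∈𝒳ⁿ} Pₙ(xⁿ)·|fₙ⁻¹(fₙ(xⁿ))|^ρ = 1. -/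
open Filter Real

/-!
For a single distribution `P` on `Y`, put `S = ∑ y, P y ^ (1 / (1 + ρ))` and give `y` the weight
`w y = M * P y ^ (1 / (1 + ρ)) / (4 * S)`. Round `1 / w y` down to a power of two, capped near
`|Y|`, so that only about `log₂ |Y|` different values occur, and cut each level set into blocks of
that size. Up to a constant, at most `2 * ∑ y, w y + log₂ |Y| = M / 2 + log₂ |Y|` blocks arise, and
the block of `y` is either `{y}` or has at most `1 / w y` elements. The singletons contribute at
most `1` to the `ρ`-th moment and the other blocks at most
`(4 / M) ^ ρ * S ^ (1 + ρ) = (4 * 2 ^ H / M) ^ ρ`, where `H` is the Rényi entropy. With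
`M = ⌊2 ^ (n * R)⌋` and `H ≤ n * r` for some `r < R` this tends to `0`, while `M` outgrows the
logarithmic overhead, which is linear in `n`.
-/

open Finset Topology

section Partitions

variable {α β ι : Type*} [Fintype α] [Fintype β] [DecidableEq β] [Fintype ι]

lemma exists_forall_card_fiber_le {b : ℕ} (h : Fintype.card α ≤ Fintype.card β * b) :
    ∃ f : α → β, ∀ z, #{x | f x = z} ≤ b := by
  obtain ⟨e⟩ : Nonempty (α ↪ β × Fin b) :=
    Function.Embedding.nonempty_of_card_le (by simpa using h)
  refine ⟨fun x => (e x).1, fun z => ?_⟩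
  have hinj : Set.InjOn (fun x => (e x).2) ({x | (e x).1 = z} : Finset α) := by
    intro x hx y hy hxy
    simp only [coe_filter_univ, Set.mem_ofPred_eq] at hx hy
    exact e.injective (Prod.ext (hx.trans hy.symm) hxy)
  simpa using card_le_card_of_injOn _ (fun _ _ => mem_univ _) hinj

lemma exists_forall_card_fiber_le_of_levels [DecidableEq ι] (k : α → ι) (b q : ι → ℕ)
    (h : ∀ i, #{x | k x = i} ≤ q i * b i) (hq : ∑ i, q i ≤ Fintype.card β) :
    ∃ f : α → β, ∀ x, #{y | f y = f x} ≤ b (k x) := by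
  have hlevel : ∀ i, ∃ g : {x // k x = i} → Fin (q i), ∀ z, #{x | g x = z} ≤ b i := fun i =>
    exists_forall_card_fiber_le (by simpa [Fintype.card_subtype] using h i)
  choose g hg using hlevel
  obtain ⟨e⟩ : Nonempty ((Σ i, Fin (q i)) ↪ β) :=
    Function.Embedding.nonempty_of_card_le (by simpa using hq)
  refine ⟨fun x => e ⟨k x, g (k x) ⟨x, rfl⟩⟩, fun x => ?_⟩
  have hcolour : ∀ i y (hy : k y = i),
      (⟨k y, g (k y) ⟨y, rfl⟩⟩ : Σ i, Fin (q i)) = ⟨i, g i ⟨y, hy⟩⟩ := by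
    rintro _ y rfl
    rfl
  have hsub : ({y | e ⟨k y, g (k y) ⟨y, rfl⟩⟩ = e ⟨k x, g (k x) ⟨x, rfl⟩⟩} : Finset α) ⊆
      ({y | g (k x) y = g (k x) ⟨x, rfl⟩} : Finset {y // k y = k x}).map
        (Function.Embedding.subtype _) := by
    intro y hy
    have heq := e.injective (mem_filter.1 hy).2
    have hk : k y = k x := congrArg Sigma.fst heq
    rw [hcolour _ y hk] at heq
    exact Finset.mem_map.2 ⟨⟨y, hk⟩, by simpa using sigma_mk_injective heq, rfl⟩
  exact (card_le_card hsub).trans ((card_map _).trans_le (hg _ _))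

lemma sum_card_fiber_div_le_sum_inv [DecidableEq ι] (k : α → ι) (b : ι → ℕ) :
    ((∑ i, #{x | k x = i} / b i : ℕ) : ℝ) ≤ ∑ x, (b (k x) : ℝ)⁻¹ := by
  calc ((∑ i, #{x | k x = i} / b i : ℕ) : ℝ)
      ≤ ∑ i, (#{x | k x = i} : ℝ) / b i := by
        push_cast
        exact sum_le_sum fun i _ => Nat.cast_div_le
    _ = ∑ i, ∑ x with k x = i, (b (k x) : ℝ)⁻¹ := by
        refine sum_congr rfl fun i _ => ?_
        rw [sum_congr rfl fun x hx => by rw [(mem_filter.1 hx).2], sum_const, nsmul_eq_mul,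
          div_eq_mul_inv]
    _ = ∑ x, (b (k x) : ℝ)⁻¹ := sum_fiberwise _ _ _

lemma exists_forall_card_fiber_le_of_sum_inv_le (k : α → ι) {b : ι → ℕ} (hb : ∀ i, 0 < b i)
    (h : ∑ x, (b (k x) : ℝ)⁻¹ + Fintype.card ι ≤ Fintype.card β) :
    ∃ f : α → β, ∀ x, #{y | f y = f x} ≤ b (k x) := by
  classical
  refine exists_forall_card_fiber_le_of_levels k b (fun i => #{x | k x = i} / b i + 1)
    (fun i => (Nat.lt_div_mul_add (hb i)).le.trans_eq (by ring)) ?_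
  have hblocks : ((∑ i, #{x | k x = i} / b i : ℕ) : ℝ) + Fintype.card ι ≤ Fintype.card β := by
    linarith [sum_card_fiber_div_le_sum_inv k b]
  rw [sum_add_distrib, sum_const, card_univ, smul_eq_mul, mul_one]
  exact_mod_cast hblocks

lemma exists_le_two_pow_mul_le_one {w : ℝ} (hw : 0 ≤ w) (K : ℕ) :
    ∃ k ≤ K, ((2 : ℝ) ^ k)⁻¹ ≤ 2 * w + (2 ^ K)⁻¹ ∧ (k = 0 ∨ 2 ^ k * w ≤ 1) := by
  classical
  let p : ℕ → Prop := fun k => k = 0 ∨ 2 ^ k * w ≤ 1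
  set k := Nat.findGreatest p K
  have hle : k ≤ K := Nat.findGreatest_le K
  refine ⟨k, hle, ?_, Nat.findGreatest_spec (P := p) K.zero_le (Or.inl rfl)⟩
  rcases hle.eq_or_lt with hkK | hkK
  · rw [hkK]
    linarith
  · have hmax : ¬p (k + 1) := Nat.findGreatest_is_greatest k.lt_succ_self hkK
    have hw2 : 1 < 2 ^ k * (2 * w) := by
      simpa [p, pow_succ, mul_assoc] using hmax
    have hinv : ((2 : ℝ) ^ k)⁻¹ ≤ 2 * w := (inv_le_iff_one_le_mul₀' (by positivity)).2 hw2.le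
    have : (0 : ℝ) ≤ (2 ^ K)⁻¹ := by positivity
    linarith

lemma exists_forall_card_fiber_le_one_or_mul_le_one {w : α → ℝ} (hw : ∀ x, 0 ≤ w x)
    (h : 2 * ∑ x, w x + Nat.clog 2 (Fintype.card α) + 2 ≤ Fintype.card β) :
    ∃ f : α → β, ∀ x, #{y | f y = f x} ≤ 1 ∨ #{y | f y = f x} * w x ≤ 1 := by
  set K := Nat.clog 2 (Fintype.card α)
  choose k hkK hsum hk using fun x => exists_le_two_pow_mul_le_one (hw x) K
  have hcap : ∑ _x : α, ((2 : ℝ) ^ K)⁻¹ ≤ 1 := by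
    have hcard : (Fintype.card α : ℝ) ≤ 2 ^ K := by
      exact_mod_cast Nat.le_pow_clog one_lt_two (Fintype.card α)
    rw [sum_const, card_univ, nsmul_eq_mul, ← div_eq_mul_inv]
    exact div_le_one_of_le₀ hcard (by positivity)
  have hbudget : ∑ x, ((2 : ℝ) ^ k x)⁻¹ + (K + 1) ≤ Fintype.card β := by
    have := sum_le_sum fun x (_ : x ∈ univ) => hsum x
    rw [sum_add_distrib, ← mul_sum] at this
    linarith
  obtain ⟨f, hf⟩ := exists_forall_card_fiber_le_of_sum_inv_le (β := β)
    (fun x => (⟨k x, Nat.lt_succ_of_le (hkK x)⟩ : Fin (K + 1))) (b := fun i => 2 ^ (i : ℕ))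
    (fun _ => by positivity) (by simpa using hbudget)
  refine ⟨f, fun x => (hk x).imp (fun h0 => by simpa [h0] using hf x) fun hkw => ?_⟩
  have hcard : (#{y | f y = f x} : ℝ) ≤ 2 ^ k x := by exact_mod_cast hf x
  exact (mul_le_mul_of_nonneg_right hcard (hw x)).trans hkw

end Partitions

section Moments

variable {α β : Type*} [Fintype α] [DecidableEq β]

/-- The `ρ`-th moment, under the weights `P`, of the number of tasks performed when all tasks with
the same description under `f` as the requested one are performed. -/
noncomputable def taskMoment (ρ : ℝ) (P : α → ℝ) (f : α → β) : ℝ :=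
  ∑ x, P x * (#{y | f y = f x} : ℝ) ^ ρ

lemma sum_le_taskMoment {ρ : ℝ} (hρ : 0 ≤ ρ) {P : α → ℝ} (hP : ∀ x, 0 ≤ P x) (f : α → β) :
    ∑ x, P x ≤ taskMoment ρ P f := by
  refine sum_le_sum fun x _ => le_mul_of_one_le_right (hP x) (Real.one_le_rpow ?_ hρ)
  exact_mod_cast card_pos.2 ⟨x, by simp⟩

lemma rpow_one_add_mul_rpow_le {ρ q N c : ℝ} (hρ : 0 ≤ ρ) (hq : 0 ≤ q) (hN : 0 ≤ N) (hc : 0 ≤ c)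
    (h : N ≤ 1 ∨ N * q ≤ c) : q ^ (1 + ρ) * N ^ ρ ≤ q ^ (1 + ρ) + c ^ ρ * q := by
  rcases h with h | h
  · have : q ^ (1 + ρ) * N ^ ρ ≤ q ^ (1 + ρ) :=
      mul_le_of_le_one_right (by positivity) (Real.rpow_le_one hN h hρ)
    have : 0 ≤ c ^ ρ * q := by positivity
    linarith
  · calc q ^ (1 + ρ) * N ^ ρ = (N * q) ^ ρ * q := by
          rw [Real.rpow_one_add' hq (by positivity), Real.mul_rpow hN hq]
          ring
      _ ≤ c ^ ρ * q := by gcongr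
      _ ≤ q ^ (1 + ρ) + c ^ ρ * q := le_add_of_nonneg_left (by positivity)

lemma exists_taskMoment_rpow_le [Fintype β] {ρ : ℝ} (hρ : 0 ≤ ρ) {q : α → ℝ} (hq : ∀ x, 0 ≤ q x)
    (h : (Nat.clog 2 (Fintype.card α) : ℝ) + 2 ≤ Fintype.card β / 2) :
    ∃ f : α → β, taskMoment ρ (fun x => q x ^ (1 + ρ)) f ≤
      ∑ x, q x ^ (1 + ρ) + (4 / Fintype.card β) ^ ρ * (∑ x, q x) ^ (1 + ρ) := by
  set S := ∑ x, q x with hSdef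
  have hS : 0 ≤ S := sum_nonneg fun x _ => hq x
  set M : ℝ := (Fintype.card β : ℝ)
  have hM : 0 < M := by
    have : (0 : ℝ) ≤ Nat.clog 2 (Fintype.card α) := by positivity
    linarith
  have hweights : 2 * ∑ x, M / 4 * (q x / S) ≤ M / 2 := by
    rw [← mul_sum, ← sum_div, ← hSdef]
    nlinarith [div_self_le_one S]
  obtain ⟨f, hf⟩ := exists_forall_card_fiber_le_one_or_mul_le_one (β := β)
    (w := fun x => M / 4 * (q x / S))
    (fun x => mul_nonneg (by positivity) (div_nonneg (hq x) hS)) (by linarith)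
  have hfiber : ∀ x, (#{y | f y = f x} : ℝ) ≤ 1 ∨ #{y | f y = f x} * q x ≤ 4 / M * S := by
    refine fun x => (hf x).imp (by exact_mod_cast ·) fun hx => ?_
    rcases (hq x).eq_or_lt with h0 | h0
    · rw [← h0, mul_zero]
      positivity
    · have hSpos : 0 < S := h0.trans_le (single_le_sum (fun y _ => hq y) (mem_univ x))
      field_simp at hx ⊢
      linarith
  refine ⟨f, (sum_le_sum fun x _ => rpow_one_add_mul_rpow_le hρ (hq x) (by positivity)
    (by positivity) (hfiber x)).trans_eq ?_⟩
  rw [sum_add_distrib, ← mul_sum, ← hSdef, Real.mul_rpow (by positivity) hS,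
    Real.rpow_one_add' hS (by positivity)]
  ring

end Moments

section Renyi

variable {Y : Type*} [Fintype Y] {ρ : ℝ} {P : Y → ℝ}

lemma one_le_sum_rpow (hρ : 0 ≤ ρ) (hP0 : ∀ y, 0 ≤ P y) (hP1 : ∑ y, P y = 1) :
    1 ≤ ∑ y, P y ^ (1 / (1 + ρ)) := by
  have hle : ∀ y, P y ≤ 1 := fun y =>
    hP1 ▸ single_le_sum (fun z _ => hP0 z) (mem_univ y)
  have hexp : 1 / (1 + ρ) ≤ 1 := div_le_one_of_le₀ (by linarith) (by positivity)
  exact hP1.symm.trans_le <|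
    sum_le_sum fun y _ => Real.self_le_rpow_of_le_one (hP0 y) (hle y) hexp

lemma rpow_one_div_one_add_rpow (hρ : 0 ≤ ρ) {p : ℝ} (hp : 0 ≤ p) :
    (p ^ (1 / (1 + ρ))) ^ (1 + ρ) = p := by
  rw [one_div, Real.rpow_inv_rpow hp (by positivity)]

lemma renyiEnt_nonneg (hρ : 0 ≤ ρ) (hP0 : ∀ y, 0 ≤ P y) (hP1 : ∑ y, P y = 1) :
    0 ≤ renyiEnt ρ P :=
  mul_nonneg (by positivity) (Real.logb_nonneg one_lt_two (one_le_sum_rpow hρ hP0 hP1))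

lemma two_rpow_renyiEnt_rpow (hρ : 0 < ρ) (hP0 : ∀ y, 0 ≤ P y) (hP1 : ∑ y, P y = 1) :
    ((2 : ℝ) ^ renyiEnt ρ P) ^ ρ = (∑ y, P y ^ (1 / (1 + ρ))) ^ (1 + ρ) := by
  have hS : 0 < ∑ y, P y ^ (1 / (1 + ρ)) := one_pos.trans_le (one_le_sum_rpow hρ.le hP0 hP1)
  have hexp : renyiEnt ρ P * ρ = Real.logb 2 (∑ y, P y ^ (1 / (1 + ρ))) * (1 + ρ) := by
    rw [renyiEnt]
    field_simp
  rw [← Real.rpow_mul zero_le_two, hexp, Real.rpow_mul zero_le_two,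
    Real.rpow_logb two_pos (by norm_num) hS]

lemma card_pos_of_sum_eq_one (hP1 : ∑ y, P y = 1) : 0 < Fintype.card Y :=
  card_pos.2 (nonempty_of_sum_ne_zero (hP1.trans_ne one_ne_zero))

lemma renyiEnt_le_logb_card (hρ : 0 < ρ) (hP0 : ∀ y, 0 ≤ P y) (hP1 : ∑ y, P y = 1) :
    renyiEnt ρ P ≤ Real.logb 2 (Fintype.card Y) := by
  have hcard : (0 : ℝ) < Fintype.card Y := by exact_mod_cast card_pos_of_sum_eq_one hP1
  have hpow : ((2 : ℝ) ^ renyiEnt ρ P) ^ ρ ≤ (Fintype.card Y : ℝ) ^ ρ := by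
    calc ((2 : ℝ) ^ renyiEnt ρ P) ^ ρ
        ≤ (Fintype.card Y : ℝ) ^ (1 + ρ - 1) * ∑ y, (P y ^ (1 / (1 + ρ))) ^ (1 + ρ) := by
          rw [two_rpow_renyiEnt_rpow hρ hP0 hP1, ← card_univ]
          exact Real.rpow_sum_le_const_mul_sum_rpow_of_nonneg _ (by linarith)
            fun y _ => Real.rpow_nonneg (hP0 y) _
      _ = (Fintype.card Y : ℝ) ^ ρ := by
          simp only [rpow_one_div_one_add_rpow hρ.le (hP0 _), hP1, mul_one, add_sub_cancel_left]
  rw [Real.le_logb_iff_rpow_le one_lt_two hcard]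
  exact (Real.rpow_le_rpow_iff (by positivity) hcard.le hρ).1 hpow

lemma exists_taskMoment_le {β : Type*} [Fintype β] [DecidableEq β] (hρ : 0 < ρ)
    (hP0 : ∀ y, 0 ≤ P y) (hP1 : ∑ y, P y = 1)
    (h : (Nat.clog 2 (Fintype.card Y) : ℝ) + 2 ≤ Fintype.card β / 2) :
    ∃ f : Y → β, taskMoment ρ P f ≤
      1 + (4 * ((2 : ℝ) ^ renyiEnt ρ P / Fintype.card β)) ^ ρ := by
  obtain ⟨f, hf⟩ := exists_taskMoment_rpow_le (β := β) hρ.le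
    (fun y => Real.rpow_nonneg (hP0 y) (1 / (1 + ρ))) h
  simp only [rpow_one_div_one_add_rpow hρ.le (hP0 _), hP1] at hf
  rw [← two_rpow_renyiEnt_rpow hρ hP0 hP1, ← Real.mul_rpow (by positivity) (by positivity),
    div_mul_eq_mul_div, mul_div_assoc] at hf
  exact ⟨f, hf⟩

end Renyi

section Asymptotics

variable {R : ℝ}

lemma floor_two_rpow_pos (hR : 0 ≤ R) (n : ℕ) : 0 < ⌊(2 : ℝ) ^ (n * R)⌋₊ :=
  Nat.floor_pos.2 (Real.one_le_rpow one_le_two (by positivity))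

lemma two_rpow_div_two_le_floor (hR : 0 ≤ R) (n : ℕ) :
    (2 : ℝ) ^ (n * R) / 2 ≤ ⌊(2 : ℝ) ^ (n * R)⌋₊ := by
  have hlt := Nat.lt_floor_add_one ((2 : ℝ) ^ (n * R))
  have hone : (1 : ℝ) ≤ ⌊(2 : ℝ) ^ (n * R)⌋₊ := by
    exact_mod_cast floor_two_rpow_pos hR n
  linarith

lemma eventually_mul_add_le_floor_two_rpow (hR : 0 < R) (a b : ℝ) :
    ∀ᶠ n : ℕ in atTop, a * n + b ≤ ⌊(2 : ℝ) ^ (n * R)⌋₊ := by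
  have hbase : (1 : ℝ) < 2 ^ R := Real.one_lt_rpow one_lt_two hR
  have hlin := (isLittleO_coe_const_pow_of_one_lt hbase).const_mul_left a
  have hconst := (isLittleO_pow_const_const_pow_of_one_lt (R := ℝ) 0 hbase).const_mul_left b
  filter_upwards [(hlin.add hconst).bound (half_pos one_pos)] with n hn
  have hpow : ((2 : ℝ) ^ R) ^ n = 2 ^ (n * R) := by
    rw [mul_comm, Real.rpow_mul zero_le_two, Real.rpow_natCast]
  rw [pow_zero, mul_one, hpow, Real.norm_of_nonneg (by positivity : (0 : ℝ) ≤ 2 ^ (n * R))] at hn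
  linarith [le_of_abs_le hn, two_rpow_div_two_le_floor hR.le n]

lemma tendsto_two_rpow_div_floor_two_rpow {r : ℝ} {h : ℕ → ℝ} (hR : 0 ≤ R) (hrR : r < R)
    (hh : ∀ᶠ n in atTop, h n ≤ n * r) :
    Tendsto (fun n : ℕ => (2 : ℝ) ^ h n / ⌊(2 : ℝ) ^ (n * R)⌋₊) atTop (𝓝 0) := by
  have hbase : (2 : ℝ) ^ (r - R) < 1 :=
    Real.rpow_lt_one_of_one_lt_of_neg one_lt_two (by linarith)
  have hgeom : Tendsto (fun n : ℕ => 2 * ((2 : ℝ) ^ (r - R)) ^ n) atTop (𝓝 0) := by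
    simpa using (tendsto_pow_atTop_nhds_zero_of_lt_one (by positivity) hbase).const_mul 2
  refine squeeze_zero' (Eventually.of_forall fun n => by positivity) ?_ hgeom
  filter_upwards [hh] with n hn
  calc (2 : ℝ) ^ h n / ⌊(2 : ℝ) ^ (n * R)⌋₊
      ≤ 2 ^ (n * r) / (2 ^ (n * R) / 2) := by
        gcongr
        · exact one_le_two
        · exact two_rpow_div_two_le_floor hR n
    _ = 2 * (2 ^ (r - R)) ^ n := by
        rw [← Real.rpow_natCast, ← Real.rpow_mul zero_le_two, div_div_eq_mul_div, mul_comm,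
          mul_div_assoc, ← Real.rpow_sub two_pos]
        ring_nf

end Asymptotics

section Rate

variable {Y : ℕ → Type*} [∀ n, Fintype (Y n)] {C : ℕ} {ρ : ℝ} {P : (n : ℕ) → Y n → ℝ}

lemma isBoundedUnder_renyiEnt_div (hC : ∀ n, Fintype.card (Y n) ≤ C ^ n) (hρ : 0 < ρ)
    (hP0 : ∀ n y, 0 ≤ P n y) (hP1 : ∀ n, ∑ y, P n y = 1) :
    IsBoundedUnder (· ≤ ·) atTop (fun n : ℕ => renyiEnt ρ (P n) / n) := by
  refine isBoundedUnder_of_eventually_le (a := Real.logb 2 C) ?_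
  filter_upwards [eventually_gt_atTop 0] with n hn
  rw [div_le_iff₀' (by exact_mod_cast hn), ← Real.logb_pow]
  refine (renyiEnt_le_logb_card hρ (hP0 n) (hP1 n)).trans
    (Real.logb_le_logb_of_le one_lt_two ?_ ?_)
  · exact_mod_cast card_pos_of_sum_eq_one (hP1 n)
  · exact_mod_cast hC n

lemma pos_of_limsup_renyiEnt_div_lt (hC : ∀ n, Fintype.card (Y n) ≤ C ^ n) (hρ : 0 < ρ)
    (hP0 : ∀ n y, 0 ≤ P n y) (hP1 : ∀ n, ∑ y, P n y = 1) {R : ℝ}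
    (hR : limsup (fun n : ℕ => renyiEnt ρ (P n) / n) atTop < R) : 0 < R := by
  obtain ⟨n, hn⟩ :=
    (eventually_lt_of_limsup_lt hR (isBoundedUnder_renyiEnt_div hC hρ hP0 hP1)).exists
  exact (div_nonneg (renyiEnt_nonneg hρ.le (hP0 n) (hP1 n)) n.cast_nonneg).trans_lt hn

lemma clog_two_card_le (hC : ∀ n, Fintype.card (Y n) ≤ C ^ n) (n : ℕ) :
    Nat.clog 2 (Fintype.card (Y n)) ≤ Nat.clog 2 C * n := by
  refine Nat.clog_le_of_le_pow ((hC n).trans ?_)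
  rw [pow_mul]
  exact Nat.pow_le_pow_left (Nat.le_pow_clog one_lt_two C) n

lemma exists_eventually_taskMoment_le (hC : ∀ n, Fintype.card (Y n) ≤ C ^ n) (hρ : 0 < ρ)
    (hP0 : ∀ n y, 0 ≤ P n y) (hP1 : ∀ n, ∑ y, P n y = 1) {R : ℝ} (hR : 0 < R) :
    ∃ f : (n : ℕ) → Y n → Fin ⌊(2 : ℝ) ^ (n * R)⌋₊, ∀ᶠ n : ℕ in atTop,
      taskMoment ρ (P n) (f n) ≤
        1 + (4 * ((2 : ℝ) ^ renyiEnt ρ (P n) / ⌊(2 : ℝ) ^ (n * R)⌋₊)) ^ ρ := by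
  have (n : ℕ) : Nonempty (Fin ⌊(2 : ℝ) ^ (n * R)⌋₊) := ⟨⟨0, floor_two_rpow_pos hR.le n⟩⟩
  choose! f hf using fun n : ℕ =>
    exists_taskMoment_le (β := Fin ⌊(2 : ℝ) ^ (n * R)⌋₊) hρ (hP0 n) (hP1 n)
  refine ⟨f, ?_⟩
  filter_upwards [eventually_mul_add_le_floor_two_rpow hR (2 * Nat.clog 2 C) 4] with n hn
  have hclog : (Nat.clog 2 (Fintype.card (Y n)) : ℝ) ≤ Nat.clog 2 C * n := by
    exact_mod_cast clog_two_card_le hC n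
  simpa only [Fintype.card_fin] using hf n (by rw [Fintype.card_fin]; linarith)

end Rate

theorem tasks_rate_direct_general {Y : ℕ → Type*} [∀ n, Fintype (Y n)] {C : ℕ}
    (hC : ∀ n, Fintype.card (Y n) ≤ C ^ n) (ρ : ℝ) (hρ : 0 < ρ) (P : (n : ℕ) → Y n → ℝ)
    (hP0 : ∀ n y, 0 ≤ P n y) (hP1 : ∀ n, ∑ y, P n y = 1) (R : ℝ)
    (hR : limsup (fun n : ℕ => renyiEnt ρ (P n) / n) atTop < R) :
    ∃ f : (n : ℕ) → Y n → Fin ⌊(2 : ℝ) ^ (n * R)⌋₊,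
      Tendsto (fun n => taskMoment ρ (P n) (f n)) atTop (𝓝 1) := by
  have hRpos : 0 < R := pos_of_limsup_renyiEnt_div_lt hC hρ hP0 hP1 hR
  obtain ⟨f, hf⟩ := exists_eventually_taskMoment_le hC hρ hP0 hP1 hRpos
  obtain ⟨r, hr, hrR⟩ := exists_between hR
  have hrate : ∀ᶠ n : ℕ in atTop, renyiEnt ρ (P n) ≤ n * r := by
    filter_upwards [eventually_lt_of_limsup_lt hr (isBoundedUnder_renyiEnt_div hC hρ hP0 hP1),
      eventually_gt_atTop 0] with n hn hpos
    exact ((div_lt_iff₀' (by exact_mod_cast hpos)).1 hn).le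
  have hupper : Tendsto (fun n : ℕ =>
      1 + (4 * ((2 : ℝ) ^ renyiEnt ρ (P n) / ⌊(2 : ℝ) ^ (n * R)⌋₊)) ^ ρ) atTop (𝓝 1) := by
    simpa [hρ.ne'] using (((tendsto_two_rpow_div_floor_two_rpow hRpos.le hrR hrate).const_mul
      4).rpow_const (Or.inr hρ.le)).const_add 1
  exact ⟨f, tendsto_of_tendsto_of_tendsto_of_le_of_le' tendsto_const_nhds hupper
    (Eventually.of_forall fun n => hP1 n ▸ sum_le_taskMoment hρ.le (hP0 n) (f n)) hf⟩

/-- if `R` exceeds the limsup of the Rényi entropy rate of order `1/(1+ρ)`,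
then there are encoders of rate `R` driving the ρ-th moment of the ratio of performed
tasks to one. -/
theorem tasks_rate_direct {X : Type*} [Fintype X] [Nonempty X]
    (ρ : ℝ) (hρ : 0 < ρ)
    (P : (n : ℕ) → (Fin n → X) → ℝ)
    (hP0 : ∀ n xs, 0 ≤ P n xs) (hP1 : ∀ n, ∑ xs, P n xs = 1)
    (R : ℝ)
    (hR : Filter.limsup (fun n : ℕ => renyiEnt ρ (P n) / (n : ℝ)) Filter.atTop < R) :
    ∃ f : (n : ℕ) → (Fin n → X) → Fin ⌊(2 : ℝ) ^ ((n : ℝ) * R)⌋₊,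
      Filter.Tendsto
        (fun n : ℕ => ∑ xs, P n xs *
          ((Finset.univ.filter fun ys => f n ys = f n xs).card : ℝ) ^ ρ)
        Filter.atTop (nhds 1) := by
  exact tasks_rate_direct_general (C := Fintype.card X) (by simp) ρ hρ P hP0 hP1 R hR
end

section
/- Let 𝒳 be a finite nonempty set and let λ : 𝒳 → ℕ ∪ {+∞} (ℕ = {1,2,…}) satisfy Σ_{x∈𝒳} 1/λ(x) = μ, with the convention 1/∞ = 0. Then for every real α > 1 there exists a partition of 𝒳 into at most ⌊α·μ + log_α|𝒳| + 2⌋ nonempty subsets such that for every x ∈ 𝒳, the cardinality L(x) of the subset containing x satisfies L(x) ≤ min{λ(x), |𝒳|}. -/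
open scoped ENNReal

/-!
Group the elements with `λ x < |𝒳|` into levels according to `⌊log_α λ(x)⌋`, and cut each level
into chunks of size at most its smallest label `b`. Labels within a level differ by a factor less
than `α`, so a level with `k` elements contributes at least `k / (α b)` to `∑ 1/λ`, and therefore
needs at most `k / b + 1 ≤ α ∑ 1/λ + 1` chunks. There are at most `log_α |𝒳| + 1` levels, and the
elements with `|𝒳| ≤ λ x` form one further part.
-/

open Finset

section Finpartition

theorem card_parts_extendOfLE_le {β : Type*} [GeneralizedBooleanAlgebra β] [DecidableEq β] {a b : β}
    (P : Finpartition a) (hab : a ≤ b) : #(P.extendOfLE hab).parts ≤ #P.parts + 1 := by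
  have hsubset : (P.extendOfLE hab).parts ⊆ insert (b \ a) P.parts := fun p hp ↦
    mem_insert.mpr (P.mem_parts_or_eq_sdiff_of_mem_extendOfLE hab hp).symm
  exact (card_le_card hsubset).trans (card_insert_le _ _)

variable {X : Type*} [DecidableEq X]

theorem exists_finpartition_card_parts_le_div_add_one (s : Finset X) {n : ℕ} (hn : n ≠ 0) :
    ∃ P : Finpartition s, #P.parts ≤ #s / n + 1 ∧ ∀ B ∈ P.parts, #B ≤ n := by
  obtain hs | hs := le_or_gt (#s / n + 1) #s
  · obtain ⟨P, hP, hcard⟩ := Finpartition.exists_equipartition_card_eq s (Nat.succ_ne_zero _) hs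
    refine ⟨P, hcard.le, fun B hB ↦ ?_⟩
    have haverage : #s / (#s / n + 1) < n := by
      rw [Nat.div_lt_iff_lt_mul (Nat.succ_pos _)]
      exact Nat.lt_mul_div_succ _ (Nat.pos_of_ne_zero hn)
    calc #B ≤ #s / #P.parts + 1 := hP.card_part_le_average_add_one hB
      _ ≤ n := by rwa [hcard]
  · refine ⟨⊥, by simpa only [Finpartition.card_bot] using hs.le, fun B hB ↦ ?_⟩
    obtain ⟨x, -, rfl⟩ := Finpartition.mem_bot_iff.mp hB
    simpa only [card_singleton] using Nat.one_le_iff_ne_zero.mpr hn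

theorem exists_finpartition_parts_eq_biUnion_fiber {ι : Type*} [DecidableEq ι] {s : Finset X}
    {I : Finset ι} {f : X → ι} (hf : ∀ x ∈ s, f x ∈ I)
    (P : ∀ i, Finpartition {x ∈ s | f x = i}) :
    ∃ Q : Finpartition s, Q.parts = I.biUnion fun i ↦ (P i).parts := by
  have hdisjoint : I.SupIndep fun i ↦ {x ∈ s | f x = i} :=
    supIndep_iff_pairwiseDisjoint.mpr (Set.pairwiseDisjoint_filter f _ s)
  have hsup : (I.sup fun i ↦ {x ∈ s | f x = i}) = s := by
    rw [sup_eq_biUnion, biUnion_filter_eq_of_maps_to hf]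
  exact ⟨(Finpartition.combine P hdisjoint).copy hsup, rfl⟩

end Finpartition

theorem lt_mul_of_floor_logb_le {b x y : ℝ} (hb : 1 < b) (hx : 1 ≤ x) (hy : 0 < y)
    (h : ⌊Real.logb b y⌋₊ ≤ ⌊Real.logb b x⌋₊) : y < b * x := by
  have hb₀ : 0 < b := zero_lt_one.trans hb
  have hx₀ : 0 < x := zero_lt_one.trans_le hx
  rw [← Real.logb_lt_logb_iff hb hy (mul_pos hb₀ hx₀)]
  calc Real.logb b y < ⌊Real.logb b y⌋₊ + 1 := Nat.lt_floor_add_one _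
    _ ≤ ⌊Real.logb b x⌋₊ + 1 := by gcongr
    _ ≤ Real.logb b x + 1 := by gcongr; exact Nat.floor_le (Real.logb_nonneg hb hx)
    _ = Real.logb b (b * x) := by
      rw [Real.logb_mul hb₀.ne' hx₀.ne', Real.logb_self_eq_one hb, add_comm]

section Kraft

variable {X : Type*} [DecidableEq X]

theorem exists_finpartition_of_le_mul (s : Finset X) {ℓ : X → ℕ} (hℓ : ∀ x ∈ s, ℓ x ≠ 0) {c : ℝ}
    (hc : ∀ x ∈ s, ∀ y ∈ s, (ℓ y : ℝ) ≤ c * ℓ x) :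
    ∃ P : Finpartition s, (#P.parts : ℝ) ≤ c * ∑ x ∈ s, (ℓ x : ℝ)⁻¹ + 1 ∧
      ∀ B ∈ P.parts, ∀ x ∈ B, #B ≤ ℓ x := by
  obtain rfl | hs := s.eq_empty_or_nonempty
  · exact ⟨⊥, by simp, by simp⟩
  obtain ⟨z, hz, hmin⟩ := s.exists_min_image ℓ hs
  obtain ⟨P, hcard, hsize⟩ := exists_finpartition_card_parts_le_div_add_one s (hℓ z hz)
  refine ⟨P, ?_, fun B hB x hx ↦ (hsize B hB).trans (hmin x (P.subset hB hx))⟩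
  have hpos : ∀ x ∈ s, (0 : ℝ) < ℓ x := fun x hx ↦ Nat.cast_pos.mpr (Nat.pos_of_ne_zero (hℓ x hx))
  have hweight : ∀ x ∈ s, (ℓ z : ℝ)⁻¹ ≤ c * (ℓ x : ℝ)⁻¹ := fun x hx ↦ by
    rw [← div_eq_mul_inv, le_div_iff₀ (hpos x hx), inv_mul_le_iff₀ (hpos z hz), mul_comm]
    exact hc z hz x hx
  calc (#P.parts : ℝ) ≤ (#s / ℓ z : ℕ) + 1 := mod_cast hcard
    _ ≤ #s / ℓ z + 1 := by gcongr; exact Nat.cast_div_le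
    _ = ∑ _ ∈ s, (ℓ z : ℝ)⁻¹ + 1 := by rw [sum_const, nsmul_eq_mul, div_eq_mul_inv]
    _ ≤ ∑ x ∈ s, c * (ℓ x : ℝ)⁻¹ + 1 := by gcongr with x hx; exact hweight x hx
    _ = c * ∑ x ∈ s, (ℓ x : ℝ)⁻¹ + 1 := by rw [mul_sum]

theorem exists_finpartition_of_label_le (s : Finset X) {ℓ : X → ℕ} (hℓ : ∀ x ∈ s, ℓ x ≠ 0) {n : ℕ}
    (hn : ∀ x ∈ s, ℓ x ≤ n) {α : ℝ} (hα : 1 < α) :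
    ∃ P : Finpartition s,
      (#P.parts : ℝ) ≤ α * ∑ x ∈ s, (ℓ x : ℝ)⁻¹ + Real.logb α n + 1 ∧
      ∀ B ∈ P.parts, ∀ x ∈ B, #B ≤ ℓ x := by
  let level (x : X) : ℕ := ⌊Real.logb α (ℓ x)⌋₊
  let levels : Finset ℕ := range (⌊Real.logb α n⌋₊ + 1)
  have hone : ∀ x ∈ s, (1 : ℝ) ≤ ℓ x := fun x hx ↦
    Nat.one_le_cast.mpr (Nat.one_le_iff_ne_zero.mpr (hℓ x hx))
  have hlevel : ∀ x ∈ s, level x ∈ levels := fun x hx ↦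
    mem_range_succ_iff.mpr <| Nat.floor_mono <|
      Real.logb_le_logb_of_le hα (zero_lt_one.trans_le (hone x hx)) (Nat.cast_le.mpr (hn x hx))
  have hchunks (m : ℕ) : ∃ P : Finpartition {x ∈ s | level x = m},
      (#P.parts : ℝ) ≤ α * ∑ x ∈ s with level x = m, (ℓ x : ℝ)⁻¹ + 1 ∧
      ∀ B ∈ P.parts, ∀ x ∈ B, #B ≤ ℓ x := by
    refine exists_finpartition_of_le_mul _ (fun x hx ↦ hℓ x (mem_filter.mp hx).1) ?_
    intro x hx y hy
    rw [mem_filter] at hx hy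
    exact (lt_mul_of_floor_logb_le hα (hone x hx.1) (zero_lt_one.trans_le (hone y hy.1))
      (hy.2.trans hx.2.symm).le).le
  choose P hcard hsize using hchunks
  obtain ⟨Q, hQ⟩ := exists_finpartition_parts_eq_biUnion_fiber hlevel P
  refine ⟨Q, ?_, fun B hB ↦ ?_⟩
  · calc (#Q.parts : ℝ) ≤ ∑ m ∈ levels, (#(P m).parts : ℝ) := by
          rw [hQ]; exact_mod_cast card_biUnion_le
      _ ≤ ∑ m ∈ levels, (α * ∑ x ∈ s with level x = m, (ℓ x : ℝ)⁻¹ + 1) :=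
          sum_le_sum fun m _ ↦ hcard m
      _ = α * ∑ x ∈ s, (ℓ x : ℝ)⁻¹ + (⌊Real.logb α n⌋₊ + 1) := by
          rw [sum_add_distrib, ← mul_sum, sum_fiberwise_of_maps_to hlevel, sum_const, nsmul_one,
            card_range, Nat.cast_add_one]
      _ ≤ α * ∑ x ∈ s, (ℓ x : ℝ)⁻¹ + Real.logb α n + 1 := by
          rw [← add_assoc]
          gcongr
          exact Nat.floor_le (div_nonneg (Real.log_natCast_nonneg n) (Real.log_pos hα).le)
  · obtain ⟨m, -, hB⟩ := mem_biUnion.mp (hQ ▸ hB)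
    exact hsize m B hB

-- The weight of an infinite label is `0`, because `(⊤ : ℕ∞).toNat = 0` and `(0 : ℝ)⁻¹ = 0`.
theorem exists_finpartition_of_kraft (s : Finset X) {lam : X → ℕ∞} (hlam : ∀ x ∈ s, lam x ≠ 0)
    {α : ℝ} (hα : 1 < α) :
    ∃ P : Finpartition s,
      (#P.parts : ℝ) ≤ α * ∑ x ∈ s, ((lam x).toNat : ℝ)⁻¹ + Real.logb α #s + 2 ∧
      ∀ B ∈ P.parts, ∀ x ∈ B, (#B : ℕ∞) ≤ lam x := by
  let small : Finset X := {x ∈ s | lam x < #s}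
  have hsmall : small ⊆ s := filter_subset _ _
  have hne_zero : ∀ x ∈ small, (lam x).toNat ≠ 0 := fun x hx ↦ by
    obtain ⟨hxs, hlt⟩ := mem_filter.mp hx
    exact (ENat.toNat_pos (hlam x hxs) hlt.ne_top).ne'
  have hle : ∀ x ∈ small, (lam x).toNat ≤ #s := fun x hx ↦
    ENat.toNat_le_of_le_natCast (mem_filter.mp hx).2.le
  obtain ⟨P, hcard, hsize⟩ := exists_finpartition_of_label_le small hne_zero hle hα
  refine ⟨P.extendOfLE hsmall, ?_, fun B hB x hx ↦ ?_⟩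
  · calc (#(P.extendOfLE hsmall).parts : ℝ) ≤ #P.parts + 1 :=
          mod_cast card_parts_extendOfLE_le P hsmall
      _ ≤ α * ∑ x ∈ small, ((lam x).toNat : ℝ)⁻¹ + Real.logb α #s + 1 + 1 := by gcongr
      _ ≤ α * ∑ x ∈ s, ((lam x).toNat : ℝ)⁻¹ + Real.logb α #s + 1 + 1 := by gcongr
      _ = α * ∑ x ∈ s, ((lam x).toNat : ℝ)⁻¹ + Real.logb α #s + 2 := by ring
  · obtain hB | rfl := P.mem_parts_or_eq_sdiff_of_mem_extendOfLE hsmall hB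
    · exact (Nat.cast_le.mpr (hsize B hB x hx)).trans (ENat.natCast_toNat_le_self _)
    · obtain ⟨hxs, hlarge⟩ := mem_sdiff.mp hx
      calc (#(s \ small) : ℕ∞) ≤ #s := Nat.cast_le.mpr (card_le_card sdiff_subset)
        _ ≤ lam x := not_lt.mp fun hlt ↦ hlarge (mem_filter.mpr ⟨hxs, hlt⟩)

end Kraft

/-- an analog of the Kraft inequality for partitions of finite sets.
If `∑ x, 1/λ(x) = μ` (with `1/∞ = 0`), then for every `α > 1` there is a partition of `𝒳`
into at most `⌊α μ + log_α |𝒳| + 2⌋` nonempty subsets in which the cardinality of the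
subset containing `x` is at most `min (λ x) |𝒳|`. -/
theorem partition_exists_of_kraft {X : Type*} [Fintype X] [Nonempty X]
    (lam : X → ℕ∞) (hlam : ∀ x, 1 ≤ lam x)
    (μ : ℝ)
    (hμ : ∑ x : X, (if lam x = ⊤ then (0 : ℝ) else ((lam x).toNat : ℝ)⁻¹) = μ)
    (α : ℝ) (hα : 1 < α) :
    ∃ (M : ℕ) (ℒ : Fin M → Finset X),
      (∀ m, (ℒ m).Nonempty) ∧
      (∀ m m', m ≠ m' → Disjoint (ℒ m) (ℒ m')) ∧
      (∀ x : X, ∃ m, x ∈ ℒ m) ∧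
      ((M : ℤ) ≤ ⌊α * μ + Real.logb α (Fintype.card X : ℝ) + 2⌋) ∧
      (∀ m, ∀ x ∈ ℒ m, ((ℒ m).card : ℕ∞) ≤ min (lam x) (Fintype.card X : ℕ∞)) := by
  classical
  have hsum : ∑ x, ((lam x).toNat : ℝ)⁻¹ = μ := by
    rw [← hμ]
    refine sum_congr rfl fun x _ ↦ ?_
    split_ifs with h <;> simp [h]
  obtain ⟨P, hcard, hsize⟩ := exists_finpartition_of_kraft univ
    (fun x _ ↦ Order.one_le_iff_ne_zero.mp (hlam x)) hα
  rw [hsum, card_univ] at hcard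
  let e := P.parts.equivFin
  refine ⟨#P.parts, fun m ↦ e.symm m, fun m ↦ P.nonempty_of_mem_parts (e.symm m).2,
    fun m m' hne ↦ ?_, fun x ↦ ?_, Int.le_floor.mpr (mod_cast hcard), fun m x hx ↦ ?_⟩
  · exact P.disjoint (e.symm m).2 (e.symm m').2
      fun h ↦ hne (e.symm.injective (Subtype.ext h))
  · obtain ⟨B, hB, hx⟩ := P.exists_mem (mem_univ x)
    exact ⟨e ⟨B, hB⟩, by simpa only [e.symm_apply_apply] using hx⟩
  · exact le_min (hsize _ (e.symm m).2 x hx) (Nat.cast_le.mpr (card_le_univ _))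
end

section
/- Let 𝒳 = {a,b,c,d} be a four-element set and define λ(a) = 1, λ(b) = 2, λ(c) = λ(d) = 4, so that Σ_{x∈𝒳} 1/λ(x) = 2. Then there is no partition of 𝒳 into 2 nonempty subsets such that for every x ∈ 𝒳 the cardinality of the subset containing x is at most λ(x); at least 3 subsets are needed. -/
/-!
The part containing `a` is `{a}`, so it differs from the part containing `b`. Together these two
parts cover at most `1 + 2 < 4` points, so a third part is needed.
-/

theorem card_lt_card_of_sum_card_lt_of_cover {ι α : Type*} [Fintype ι] [Fintype α]
    {P : ι → Finset α} (hcover : ∀ x, ∃ i, x ∈ P i) {s : Finset ι}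
    (hs : ∑ i ∈ s, (P i).card < Fintype.card α) : s.card < Fintype.card ι := by
  classical
  rw [Finset.card_lt_iff_ne_univ]
  rintro rfl
  have hunion : Finset.univ.biUnion P = Finset.univ := by
    simpa only [Finset.eq_univ_iff_forall, Finset.mem_biUnion, Finset.mem_univ, true_and]
      using hcover
  have hle : Fintype.card α ≤ ∑ i, (P i).card := by
    rw [← Finset.card_univ, ← hunion]
    exact Finset.card_biUnion_le
  exact hle.not_gt hs

theorem counterexample_needs_three_parts_general {ι α : Type*} [Fintype ι] [Fintype α]
    {P : ι → Finset α} {lam : α → ℕ} (hcover : ∀ x, ∃ i, x ∈ P i)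
    (hcard : ∀ i, ∀ x ∈ P i, (P i).card ≤ lam x) {a b : α} (hab : a ≠ b) (ha : lam a ≤ 1)
    (hlam : lam a + lam b < Fintype.card α) : 3 ≤ Fintype.card ι := by
  classical
  obtain ⟨i, hai⟩ := hcover a
  obtain ⟨j, hbj⟩ := hcover b
  have hij : i ≠ j := by
    rintro rfl
    exact hab (Finset.card_le_one.mp ((hcard i a hai).trans ha) a hai b hbj)
  have hsum : ∑ k ∈ {i, j}, (P k).card < Fintype.card α := by
    rw [Finset.sum_pair hij]
    exact (add_le_add (hcard i a hai) (hcard j b hbj)).trans_lt hlam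
  have htwo_lt := card_lt_card_of_sum_card_lt_of_cover hcover hsum
  rwa [Finset.card_pair hij] at htwo_lt

/-- the counterexample `𝒳 = {a,b,c,d}`, `λ(a)=1`, `λ(b)=2`, `λ(c)=λ(d)=4`
(so that `∑ 1/λ = 2`): there is no partition of `𝒳` into `2` nonempty subsets with the
cardinality of the subset containing `x` at most `λ x`; at least `3` subsets are needed. -/
theorem counterexample_needs_three_parts :
    (¬ ∃ ℒ : Fin 2 → Finset (Fin 4),
        (∀ m, (ℒ m).Nonempty) ∧
        (∀ m m', m ≠ m' → Disjoint (ℒ m) (ℒ m')) ∧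
        (∀ x : Fin 4, ∃ m, x ∈ ℒ m) ∧
        (∀ m, ∀ x ∈ ℒ m, (ℒ m).card ≤ ![1, 2, 4, 4] x)) ∧
    (∀ (M : ℕ) (ℒ : Fin M → Finset (Fin 4)),
        (∀ m, (ℒ m).Nonempty) →
        (∀ m m', m ≠ m' → Disjoint (ℒ m) (ℒ m')) →
        (∀ x : Fin 4, ∃ m, x ∈ ℒ m) →
        (∀ m, ∀ x ∈ ℒ m, (ℒ m).card ≤ ![1, 2, 4, 4] x) →
        3 ≤ M) := by
  have three_le {M : ℕ} {ℒ : Fin M → Finset (Fin 4)} (hcover : ∀ x, ∃ m, x ∈ ℒ m)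
      (hcard : ∀ m, ∀ x ∈ ℒ m, (ℒ m).card ≤ ![1, 2, 4, 4] x) : 3 ≤ M := by
    simpa only [Fintype.card_fin] using counterexample_needs_three_parts_general hcover hcard
      (a := 0) (b := 1) (by decide) (by decide) (by decide)
  exact ⟨fun ⟨_, _, _, hcover, hcard⟩ => absurd (three_le hcover hcard) (by decide),
    fun _ _ _ _ hcover hcard => three_le hcover hcard⟩
end

section
/- Let P and Q be probability mass functions on a finite set 𝒳, let α > 0 with α ≠ 1, and let Pⁿ and Qⁿ denote the n-fold product distributions on 𝒳ⁿ. Then Δ_α(Pⁿ‖Qⁿ) = n·Δ_α(P‖Q). -/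
open scoped ENNReal

/-- Sundaresan's divergence `Δ_α(P‖Q)` (base-2 logarithm), valued in `EReal` so as to
accommodate the conventions `0/0 = 0` and `a/0 = +∞` for `a > 0`. -/
noncomputable def sundaresan {Y : Type*} [Fintype Y] (α : ℝ) (P Q : Y → ℝ) : EReal :=
  let Z : ℝ≥0∞ :=
    ENNReal.ofReal (∑ y, Q y ^ α) *
      (∑ y, ENNReal.ofReal (P y) / ENNReal.ofReal (Q y) ^ (1 - α)) ^ (α / (1 - α)) /
      ENNReal.ofReal (∑ y, P y ^ α) ^ ((1 : ℝ) / (1 - α))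
  if Z = ⊤ then ⊤ else ((Real.logb 2 Z.toReal : ℝ) : EReal)

/-!
The quantity inside the logarithm is built from the sums `∑ Q ^ α`, `∑ P / Q ^ (1 - α)` and
`∑ P ^ α` by products and real powers. Each summand is multiplicative in the factors of a product
distribution, so by distributivity each sum is multiplicative, and the logarithm turns the
resulting product into a sum.

On `ℝ≥0∞` a negative power of a product can fail to factor when the product is `0 * ∞`. For
`α < 1` the exponent `α / (1 - α)` is positive; for `α > 1` it is negative, but then no term
`P / Q ^ (1 - α) = P * Q ^ (α - 1)` is infinite. The same dichotomy shows that the quantity inside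
the logarithm never vanishes, so `Δ_α` never meets `log 0` and infinite values add up correctly.
-/

theorem ennreal_log_prod_div {ι : Type*} (s : Finset ι) (f : ι → ℝ≥0∞) {c : EReal} (hc : 0 ≤ c) :
    ENNReal.log (∏ i ∈ s, f i) / c = ∑ i ∈ s, ENNReal.log (f i) / c := by
  classical
  induction s using Finset.induction with
  | empty => simp
  | insert i s hi ih =>
    rw [Finset.prod_insert hi, Finset.sum_insert hi, ENNReal.log_mul_add,
      EReal.add_div_of_nonneg_right hc, ih]

theorem pos_of_sum_eq_one {X : Type*} [Fintype X] {P : X → ℝ} (hP0 : ∀ x, 0 ≤ P x)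
    (hP1 : ∑ x, P x = 1) : 0 < P :=
  lt_of_le_of_ne hP0 (by rintro rfl; simp at hP1)

section PowerSums

variable {X : Type*} [Fintype X] {α : ℝ} {P Q : X → ℝ}

/-- The sum `∑ P ^ α` of the Sundaresan divergence, as an extended nonnegative real. -/
noncomputable def powerSum (α : ℝ) (P : X → ℝ) : ℝ≥0∞ :=
  ENNReal.ofReal (∑ x, P x ^ α)

/-- The mixed sum `∑ P / Q ^ (1 - α)` of the Sundaresan divergence. Division in `ℝ≥0∞` implements
the conventions `0 / 0 = 0` and `a / 0 = ∞` for `a > 0`. -/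
noncomputable def crossSum (α : ℝ) (P Q : X → ℝ) : ℝ≥0∞ :=
  ∑ x, ENNReal.ofReal (P x) / ENNReal.ofReal (Q x) ^ (1 - α)

/-- The argument of the logarithm in the Sundaresan divergence `Δ_α(P‖Q)`. -/
noncomputable def sundaresanArg (α : ℝ) (P Q : X → ℝ) : ℝ≥0∞ :=
  powerSum α Q * crossSum α P Q ^ (α / (1 - α)) / powerSum α P ^ (1 / (1 - α))

theorem powerSum_ne_top : powerSum α P ≠ ⊤ :=
  ENNReal.ofReal_ne_top

theorem powerSum_ne_zero (hP : 0 < P) : powerSum α P ≠ 0 := by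
  obtain ⟨hP0, x, hx⟩ := Pi.lt_def.mp hP
  refine (ENNReal.ofReal_pos.mpr ?_).ne'
  exact Finset.sum_pos' (fun y _ ↦ Real.rpow_nonneg (hP0 y) α)
    ⟨x, Finset.mem_univ x, Real.rpow_pos_of_pos hx α⟩

theorem crossSum_ne_zero (hα : α ≤ 1) (hP : 0 < P) : crossSum α P Q ≠ 0 := by
  obtain ⟨-, x, hx⟩ := Pi.lt_def.mp hP
  refine fun h ↦ (ENNReal.div_pos (ENNReal.ofReal_pos.mpr hx).ne' ?_).ne'
    (Finset.sum_eq_zero_iff.mp h x (Finset.mem_univ x))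
  exact ENNReal.rpow_ne_top_of_nonneg (sub_nonneg.mpr hα) ENNReal.ofReal_ne_top

theorem crossSum_ne_top (hα : 1 ≤ α) : crossSum α P Q ≠ ⊤ := by
  refine ENNReal.sum_ne_top.mpr fun x _ ↦ ?_
  rw [div_eq_mul_inv, ← ENNReal.rpow_neg, neg_sub]
  exact ENNReal.mul_ne_top ENNReal.ofReal_ne_top
    (ENNReal.rpow_ne_top_of_nonneg (sub_nonneg.mpr hα) ENNReal.ofReal_ne_top)

theorem crossSum_rpow_ne_zero (hα : 0 ≤ α) (hP : 0 < P) :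
    crossSum α P Q ^ (α / (1 - α)) ≠ 0 := by
  rw [Ne, ENNReal.rpow_eq_zero_iff]
  rcases le_total α 1 with hα1 | hα1
  · rintro (⟨hzero, -⟩ | ⟨-, hexp⟩)
    · exact crossSum_ne_zero hα1 hP hzero
    · exact hexp.not_ge (div_nonneg hα (sub_nonneg.mpr hα1))
  · rintro (⟨-, hexp⟩ | ⟨htop, -⟩)
    · exact hexp.not_ge (div_nonpos_of_nonneg_of_nonpos hα (sub_nonpos.mpr hα1))
    · exact crossSum_ne_top hα1 htop

theorem sundaresanArg_ne_zero (hα : 0 ≤ α) (hP : 0 < P) (hQ : 0 < Q) :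
    sundaresanArg α P Q ≠ 0 :=
  ENNReal.div_ne_zero.mpr
    ⟨mul_ne_zero (powerSum_ne_zero hQ) (crossSum_rpow_ne_zero hα hP),
      ENNReal.rpow_ne_top_of_ne_zero (powerSum_ne_zero hP) powerSum_ne_top⟩

theorem sundaresan_eq_log_div (h : sundaresanArg α P Q ≠ 0) :
    sundaresan α P Q = ENNReal.log (sundaresanArg α P Q) / (Real.log 2 : ℝ) := by
  change (if sundaresanArg α P Q = ⊤ then ⊤
    else ((Real.logb 2 (sundaresanArg α P Q).toReal : ℝ) : EReal)) = _
  split_ifs with htop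
  · rw [htop, ENNReal.log_top,
      EReal.top_div_of_pos_ne_top (mod_cast Real.log_pos one_lt_two) (EReal.coe_ne_top _)]
  · rw [ENNReal.log_pos_real h htop, ← EReal.coe_div, Real.log_div_log]

end PowerSums

section Products

variable {ι : Type*} [Fintype ι] {X : ι → Type*} [∀ i, Fintype (X i)] {α : ℝ}
  {P Q : ∀ i, X i → ℝ}

theorem prod_crossSum_rpow (hα : 0 ≤ α) :
    ∏ i, crossSum α (P i) (Q i) ^ (α / (1 - α)) =
      (∏ i, crossSum α (P i) (Q i)) ^ (α / (1 - α)) := by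
  rcases le_total α 1 with hα1 | hα1
  · exact ENNReal.prod_rpow_of_nonneg (div_nonneg hα (sub_nonneg.mpr hα1))
  · exact ENNReal.prod_rpow_of_ne_top (fun _ _ ↦ crossSum_ne_top hα1) _

variable [DecidableEq ι]

theorem powerSum_pi (hP : ∀ i, 0 ≤ P i) :
    powerSum α (fun x : ∀ i, X i ↦ ∏ i, P i (x i)) = ∏ i, powerSum α (P i) := by
  simp only [powerSum]
  rw [← ENNReal.ofReal_prod_of_nonneg
    fun i _ ↦ Finset.sum_nonneg fun x _ ↦ Real.rpow_nonneg (hP i x) α, Fintype.prod_sum]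
  congr! 2 with x
  exact (Real.finsetProd_rpow _ _ (fun i _ ↦ hP i (x i)) α).symm

theorem crossSum_pi (hP : ∀ i, 0 ≤ P i) (hQ : ∀ i, 0 ≤ Q i) :
    crossSum α (fun x : ∀ i, X i ↦ ∏ i, P i (x i)) (fun x ↦ ∏ i, Q i (x i)) =
      ∏ i, crossSum α (P i) (Q i) := by
  -- Unlike `(a * b)⁻¹ = a⁻¹ * b⁻¹`, the identity `a / b ^ (1 - α) = a * b ^ (α - 1)` holds
  -- throughout `ℝ≥0∞`.
  simp only [crossSum, div_eq_mul_inv, ← ENNReal.rpow_neg]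
  rw [Fintype.prod_sum]
  refine Fintype.sum_congr _ _ fun x ↦ ?_
  rw [ENNReal.ofReal_prod_of_nonneg fun i _ ↦ hP i (x i),
    ENNReal.ofReal_prod_of_nonneg fun i _ ↦ hQ i (x i),
    ← ENNReal.prod_rpow_of_ne_top fun _ _ ↦ ENNReal.ofReal_ne_top, Finset.prod_mul_distrib]

theorem sundaresanArg_pi (hα : 0 ≤ α) (hP : ∀ i, 0 ≤ P i) (hQ : ∀ i, 0 ≤ Q i) :
    sundaresanArg α (fun x : ∀ i, X i ↦ ∏ i, P i (x i)) (fun x ↦ ∏ i, Q i (x i)) =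
      ∏ i, sundaresanArg α (P i) (Q i) := by
  simp only [sundaresanArg, div_eq_mul_inv _ (_ ^ _), ← ENNReal.rpow_neg]
  rw [powerSum_pi hP, powerSum_pi hQ, crossSum_pi hP hQ, Finset.prod_mul_distrib,
    Finset.prod_mul_distrib, prod_crossSum_rpow hα,
    ENNReal.prod_rpow_of_ne_top fun _ _ ↦ powerSum_ne_top]

end Products

/-- `0 < P i` refers to the order on functions: `P i` is nonnegative and not identically zero. -/
theorem sundaresan_product_general {ι : Type*} [Fintype ι] [DecidableEq ι] {X : ι → Type*}
    [∀ i, Fintype (X i)] {P Q : ∀ i, X i → ℝ} (hP : ∀ i, 0 < P i) (hQ : ∀ i, 0 < Q i)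
    {α : ℝ} (hα : 0 < α) (_hα1 : α ≠ 1) :
    sundaresan α (fun x : ∀ i, X i ↦ ∏ i, P i (x i)) (fun x ↦ ∏ i, Q i (x i)) =
      ∑ i, sundaresan α (P i) (Q i) := by
  have harg := sundaresanArg_pi hα.le (fun i ↦ (hP i).le) (fun i ↦ (hQ i).le)
  have hne (i : ι) : sundaresanArg α (P i) (Q i) ≠ 0 := sundaresanArg_ne_zero hα.le (hP i) (hQ i)
  have hlog : (0 : EReal) ≤ (Real.log 2 : ℝ) := mod_cast Real.log_nonneg one_le_two
  rw [sundaresan_eq_log_div (harg ▸ Finset.prod_ne_zero_iff.mpr fun i _ ↦ hne i), harg,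
    ennreal_log_prod_div _ _ hlog]
  exact Fintype.sum_congr _ _ fun i ↦ (sundaresan_eq_log_div (hne i)).symm

/-- the Sundaresan divergence is additive over products:
`Δ_α(Pⁿ‖Qⁿ) = n Δ_α(P‖Q)`. -/
theorem sundaresan_product {X : Type*} [Fintype X]
    (P Q : X → ℝ) (hP0 : ∀ x, 0 ≤ P x) (hP1 : ∑ x, P x = 1)
    (hQ0 : ∀ x, 0 ≤ Q x) (hQ1 : ∑ x, Q x = 1)
    (α : ℝ) (hα : 0 < α) (hα1 : α ≠ 1) (n : ℕ) :
    sundaresan α (fun xs : Fin n → X => ∏ i, P (xs i))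
        (fun xs : Fin n → X => ∏ i, Q (xs i)) =
      ((n : ℝ) : EReal) * sundaresan α P Q := by
  have hP : 0 < P := pos_of_sum_eq_one hP0 hP1
  have hQ : 0 < Q := pos_of_sum_eq_one hQ0 hQ1
  rw [sundaresan_product_general (P := fun _ ↦ P) (Q := fun _ ↦ Q)
      (fun _ ↦ hP) (fun _ ↦ hQ) hα hα1,
    Finset.sum_const, Finset.card_univ, Fintype.card_fin, EReal.nsmul_eq_mul, EReal.coe_natCast]
end

section
/- Let P and Q be probability mass functions on a finite set 𝒳 and let α > 0 with α ≠ 1. Then Δ_α(P‖Q) ≥ 0, with equality if and only if P = Q. -/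
open scoped ENNReal

/-! Passing from `P` to its escort distribution `P ^ α / ∑ y, P y ^ α`, and likewise for `Q`, turns
the Sundaresan divergence of order `α` into the Rényi divergence of order `s = α⁻¹`, that is,
`(s - 1)⁻¹ * log₂ (∑ x, p x ^ s * q x ^ (1 - s))`. The power sum is `1` if `p = q`; otherwise,
comparing each term with `s * p x + (1 - s) * q x` (weighted AM-GM for `s < 1`, Bernoulli's
inequality for `s > 1`) shows that it is `< 1` for `s < 1` and `> 1` for `s > 1`, so that the
divergence is positive. Two escort distributions agree exactly when the weights are proportional. -/

lemma ennreal_rpow_mul_rpow_one_sub {a : ℝ≥0∞} (ha : a ≠ ⊤) (s : ℝ) : a ^ s * a ^ (1 - s) = a := by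
  rcases eq_or_ne a 0 with rfl | h0
  · rcases lt_or_ge s 1 with hs | hs
    · simp [ENNReal.zero_rpow_of_pos (sub_pos.2 hs)]
    · simp [ENNReal.zero_rpow_of_pos (zero_lt_one.trans_le hs)]
  · rw [← ENNReal.rpow_add _ _ h0 ha, add_sub_cancel, ENNReal.rpow_one]

section WeightedMeans

variable {a b s : ℝ}

lemma rpow_mul_rpow_lt_weighted_mean (hs0 : 0 < s) (hs1 : s < 1) (ha : 0 ≤ a) (hb : 0 ≤ b)
    (hab : a ≠ b) : a ^ s * b ^ (1 - s) < s * a + (1 - s) * b := by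
  have h := (Real.geom_mean_lt_arith_mean_weighted_iff_of_pos Finset.univ ![s, 1 - s] ![a, b]
    (by simp [Fin.forall_fin_two, hs0, hs1]) (by simp) (by simp [Fin.forall_fin_two, ha, hb])).2
    ⟨0, Finset.mem_univ _, 1, Finset.mem_univ _, hab⟩
  simpa [Fin.prod_univ_two, Fin.sum_univ_two] using h

lemma weighted_mean_lt_rpow_mul_rpow (hs : 1 < s) (ha : 0 ≤ a) (hb : 0 < b) (hab : a ≠ b) :
    s * a + (1 - s) * b < a ^ s * b ^ (1 - s) := by
  have bernoulli : 1 + s * (a / b - 1) < (1 + (a / b - 1)) ^ s :=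
    one_add_mul_self_lt_rpow_one_add (by linarith [div_nonneg ha hb.le])
      (sub_ne_zero.2 fun h => hab ((div_eq_one_iff_eq hb.ne').1 h)) hs
  calc s * a + (1 - s) * b = (1 + s * (a / b - 1)) * b := by field_simp; ring
    _ < (1 + (a / b - 1)) ^ s * b := mul_lt_mul_of_pos_right bernoulli hb
    _ = a ^ s * b ^ (1 - s) := by
      rw [add_sub_cancel, Real.div_rpow ha hb.le, Real.rpow_sub hb, Real.rpow_one]
      ring

lemma ofReal_rpow_mul_rpow_lt_weighted_mean (hs0 : 0 < s) (hs1 : s < 1) (ha : 0 ≤ a) (hb : 0 ≤ b)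
    (hab : a ≠ b) :
    ENNReal.ofReal a ^ s * ENNReal.ofReal b ^ (1 - s) < ENNReal.ofReal (s * a + (1 - s) * b) := by
  rw [ENNReal.ofReal_rpow_of_nonneg ha hs0.le,
    ENNReal.ofReal_rpow_of_nonneg hb (sub_pos.2 hs1).le, ← ENNReal.ofReal_mul (by positivity)]
  have h := rpow_mul_rpow_lt_weighted_mean hs0 hs1 ha hb hab
  exact (ENNReal.ofReal_lt_ofReal_iff (h.trans_le' (by positivity))).2 h

lemma ofReal_rpow_mul_rpow_le_weighted_mean (hs0 : 0 < s) (hs1 : s < 1) (ha : 0 ≤ a) (hb : 0 ≤ b) :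
    ENNReal.ofReal a ^ s * ENNReal.ofReal b ^ (1 - s) ≤ ENNReal.ofReal (s * a + (1 - s) * b) := by
  rcases eq_or_ne a b with rfl | hab
  · rw [ennreal_rpow_mul_rpow_one_sub ENNReal.ofReal_ne_top, ← add_mul, add_sub_cancel, one_mul]
  · exact (ofReal_rpow_mul_rpow_lt_weighted_mean hs0 hs1 ha hb hab).le

/-- The term `(s - 1) * b` stands on the right because subtraction in `ℝ≥0∞` truncates. -/
lemma ofReal_mul_lt_rpow_mul_rpow_add (hs : 1 < s) (ha : 0 ≤ a) (hb : 0 ≤ b) (hab : a ≠ b) :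
    ENNReal.ofReal (s * a) <
      ENNReal.ofReal a ^ s * ENNReal.ofReal b ^ (1 - s) + ENNReal.ofReal ((s - 1) * b) := by
  rcases hb.eq_or_lt with rfl | hb
  · have ha' : ENNReal.ofReal a ^ s ≠ 0 := by
      simp [ENNReal.rpow_eq_zero_iff, ha.lt_of_ne' hab]
    simp [ENNReal.zero_rpow_of_neg (sub_neg.2 hs), ENNReal.mul_top ha']
  · have h := weighted_mean_lt_rpow_mul_rpow hs ha hb hab
    have hsb : 0 ≤ (s - 1) * b := mul_nonneg (sub_pos.2 hs).le hb.le
    rw [ENNReal.ofReal_rpow_of_nonneg ha (by linarith), ENNReal.ofReal_rpow_of_pos hb,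
      ← ENNReal.ofReal_mul (by positivity), ← ENNReal.ofReal_add (by positivity) hsb,
      ENNReal.ofReal_lt_ofReal_iff_of_nonneg (by positivity)]
    linarith

lemma ofReal_mul_le_rpow_mul_rpow_add (hs : 1 < s) (ha : 0 ≤ a) (hb : 0 ≤ b) :
    ENNReal.ofReal (s * a) ≤
      ENNReal.ofReal a ^ s * ENNReal.ofReal b ^ (1 - s) + ENNReal.ofReal ((s - 1) * b) := by
  rcases eq_or_ne a b with rfl | hab
  · rw [ennreal_rpow_mul_rpow_one_sub ENNReal.ofReal_ne_top,
      ← ENNReal.ofReal_add ha (mul_nonneg (sub_pos.2 hs).le ha)]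
    exact (congrArg ENNReal.ofReal (by ring)).le
  · exact (ofReal_mul_lt_rpow_mul_rpow_add hs ha hb hab).le

end WeightedMeans

lemma ennreal_sum_lt_sum {ι : Type*} {t : Finset ι} {f g : ι → ℝ≥0∞} (hf : ∑ i ∈ t, f i ≠ ⊤)
    (hle : ∀ i ∈ t, f i ≤ g i) (hlt : ∃ i ∈ t, f i < g i) : ∑ i ∈ t, f i < ∑ i ∈ t, g i := by
  classical
  obtain ⟨i, hi, hfg⟩ := hlt
  have rest_finite : ∑ j ∈ t.erase i, f j ≠ ⊤ :=
    ne_top_of_le_ne_top hf (Finset.sum_le_sum_of_subset (t.erase_subset i))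
  rw [← Finset.add_sum_erase t f hi, ← Finset.add_sum_erase t g hi]
  exact ENNReal.add_lt_add_of_lt_of_le rest_finite hfg
    (Finset.sum_le_sum fun j hj => hle j (Finset.mem_of_mem_erase hj))

lemma sameRay_iff_eq_of_sum_eq {ι R : Type*} [Fintype ι] [CommRing R] [LinearOrder R]
    [IsStrictOrderedRing R] {f g : ι → R} (hfg : ∑ i, f i = ∑ i, g i) (hg : ∑ i, g i ≠ 0) :
    SameRay R f g ↔ f = g := by
  refine ⟨fun h => ?_, by rintro rfl; rfl⟩
  have hf_ne : f ≠ 0 := by rintro rfl; simp [← hfg] at hg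
  have hg_ne : g ≠ 0 := by rintro rfl; simp at hg
  obtain ⟨c, d, hc, -, hcd⟩ := h.exists_pos hf_ne hg_ne
  have hsum : c * ∑ i, g i = d * ∑ i, g i := by
    rw [← hfg, Finset.mul_sum, hfg, Finset.mul_sum]
    exact Finset.sum_congr rfl fun i _ => congrFun hcd i
  obtain rfl : c = d := mul_right_cancel₀ hg hsum
  exact funext fun i => mul_left_cancel₀ hc.ne' (congrFun hcd i)

section HellingerSum

variable {X : Type*} [Fintype X] {p q : X → ℝ} {s : ℝ}

/-- The Hellinger sum of order `s`; the Rényi divergence of order `s` is `(s - 1)⁻¹` times its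
logarithm. The arguments are nonnegative weights; computing in `ℝ≥0∞` makes a term with
`q x = 0 < p x` infinite when `1 < s`. -/
noncomputable def hellingerSum (s : ℝ) (p q : X → ℝ) : ℝ≥0∞ :=
  ∑ x, ENNReal.ofReal (p x) ^ s * ENNReal.ofReal (q x) ^ (1 - s)

lemma hellingerSum_self (hp : ∀ x, 0 ≤ p x) :
    hellingerSum s p p = ENNReal.ofReal (∑ x, p x) := by
  rw [ENNReal.ofReal_sum_of_nonneg fun x _ => hp x]
  exact Finset.sum_congr rfl fun x _ => ennreal_rpow_mul_rpow_one_sub ENNReal.ofReal_ne_top s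

lemma hellingerSum_lt_one (hs0 : 0 < s) (hs1 : s < 1) (hp : ∀ x, 0 ≤ p x) (hq : ∀ x, 0 ≤ q x)
    (hp1 : ∑ x, p x = 1) (hq1 : ∑ x, q x = 1) (hpq : p ≠ q) : hellingerSum s p q < 1 := by
  have term_le := fun x => ofReal_rpow_mul_rpow_le_weighted_mean hs0 hs1 (hp x) (hq x)
  have finite : hellingerSum s p q ≠ ⊤ :=
    ((Finset.sum_le_sum fun x _ => term_le x).trans_lt
      (ENNReal.sum_lt_top.2 fun _ _ => ENNReal.ofReal_lt_top)).ne
  calc hellingerSum s p q < ∑ x, ENNReal.ofReal (s * p x + (1 - s) * q x) :=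
        ennreal_sum_lt_sum finite (fun x _ => term_le x) <| (Function.ne_iff.1 hpq).imp fun x hx =>
          ⟨Finset.mem_univ x, ofReal_rpow_mul_rpow_lt_weighted_mean hs0 hs1 (hp x) (hq x) hx⟩
    _ = 1 := by
      rw [← ENNReal.ofReal_sum_of_nonneg fun x _ =>
          add_nonneg (mul_nonneg hs0.le (hp x)) (mul_nonneg (sub_pos.2 hs1).le (hq x)),
        Finset.sum_add_distrib, ← Finset.mul_sum, ← Finset.mul_sum, hp1, hq1]
      simp

lemma one_lt_hellingerSum (hs : 1 < s) (hp : ∀ x, 0 ≤ p x) (hq : ∀ x, 0 ≤ q x)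
    (hp1 : ∑ x, p x = 1) (hq1 : ∑ x, q x = 1) (hpq : p ≠ q) : 1 < hellingerSum s p q := by
  have hs' : 0 ≤ s - 1 := (sub_pos.2 hs).le
  have hs0 : 0 ≤ s := by linarith
  have sum_lt : 1 + ENNReal.ofReal (s - 1) < hellingerSum s p q + ENNReal.ofReal (s - 1) := calc
    1 + ENNReal.ofReal (s - 1) = ∑ x, ENNReal.ofReal (s * p x) := by
      rw [← ENNReal.ofReal_sum_of_nonneg fun x _ => mul_nonneg hs0 (hp x), ← Finset.mul_sum, hp1,
        ← ENNReal.ofReal_one, ← ENNReal.ofReal_add zero_le_one hs', add_sub_cancel, mul_one]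
    _ < ∑ x, (ENNReal.ofReal (p x) ^ s * ENNReal.ofReal (q x) ^ (1 - s) +
          ENNReal.ofReal ((s - 1) * q x)) :=
        ennreal_sum_lt_sum (ENNReal.sum_lt_top.2 fun _ _ => ENNReal.ofReal_lt_top).ne
          (fun x _ => ofReal_mul_le_rpow_mul_rpow_add hs (hp x) (hq x)) <|
          (Function.ne_iff.1 hpq).imp fun x hx =>
            ⟨Finset.mem_univ x, ofReal_mul_lt_rpow_mul_rpow_add hs (hp x) (hq x) hx⟩
    _ = hellingerSum s p q + ENNReal.ofReal (s - 1) := by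
      rw [Finset.sum_add_distrib, ← ENNReal.ofReal_sum_of_nonneg fun x _ => mul_nonneg hs' (hq x),
        ← Finset.mul_sum, hq1, mul_one, hellingerSum]
  exact lt_of_add_lt_add_right sum_lt

lemma one_lt_hellingerSum_rpow (hs0 : 0 < s) (hs1 : s ≠ 1) (hp : ∀ x, 0 ≤ p x)
    (hq : ∀ x, 0 ≤ q x) (hp1 : ∑ x, p x = 1) (hq1 : ∑ x, q x = 1) (hpq : p ≠ q) :
    1 < hellingerSum s p q ^ (s - 1)⁻¹ := by
  rcases hs1.lt_or_gt with hs1 | hs1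
  · rw [← neg_neg (s - 1)⁻¹, ENNReal.rpow_neg, ENNReal.one_lt_inv]
    exact ENNReal.rpow_lt_one (hellingerSum_lt_one hs0 hs1 hp hq hp1 hq1 hpq)
      (neg_pos.2 (inv_neg''.2 (sub_neg.2 hs1)))
  · exact ENNReal.one_lt_rpow (one_lt_hellingerSum hs1 hp hq hp1 hq1 hpq)
      (inv_pos.2 (sub_pos.2 hs1))

end HellingerSum

section Escort

variable {X : Type*} [Fintype X] {P Q : X → ℝ} {α : ℝ}

/-- The escort distribution of order `α` of the weights `P`. -/
noncomputable def escort (α : ℝ) (P : X → ℝ) (x : X) : ℝ := P x ^ α / ∑ y, P y ^ α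

lemma sum_rpow_pos (hP0 : ∀ x, 0 ≤ P x) (hP : P ≠ 0) : 0 < ∑ x, P x ^ α := by
  obtain ⟨x, hx⟩ := Function.ne_iff.1 hP
  exact Finset.sum_pos' (fun y _ => Real.rpow_nonneg (hP0 y) α)
    ⟨x, Finset.mem_univ x, Real.rpow_pos_of_pos ((hP0 x).lt_of_ne' hx) α⟩

lemma escort_nonneg (hP0 : ∀ x, 0 ≤ P x) (x : X) : 0 ≤ escort α P x :=
  div_nonneg (Real.rpow_nonneg (hP0 x) α) (Finset.sum_nonneg fun y _ => Real.rpow_nonneg (hP0 y) α)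

lemma sum_escort (hP0 : ∀ x, 0 ≤ P x) (hP : P ≠ 0) : ∑ x, escort α P x = 1 := by
  simp only [escort, ← Finset.sum_div]
  exact div_self (sum_rpow_pos hP0 hP).ne'

lemma escort_smul {c : ℝ} (hc : 0 < c) (hP0 : ∀ x, 0 ≤ P x) :
    escort α (c • P) = escort α P := by
  funext x
  simp only [escort, Pi.smul_apply, smul_eq_mul, Real.mul_rpow hc.le (hP0 _), ← Finset.mul_sum]
  exact mul_div_mul_left _ _ (Real.rpow_pos_of_pos hc α).ne'

lemma eq_rpow_inv_smul_of_escort_eq (hα : α ≠ 0) (hP0 : ∀ x, 0 ≤ P x) (hQ0 : ∀ x, 0 ≤ Q x)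
    (hP : P ≠ 0) (h : escort α P = escort α Q) :
    P = ((∑ x, P x ^ α) / ∑ x, Q x ^ α) ^ α⁻¹ • Q := by
  have hB : 0 < ∑ x, P x ^ α := sum_rpow_pos hP0 hP
  have hA : 0 ≤ ∑ x, Q x ^ α := Finset.sum_nonneg fun x _ => Real.rpow_nonneg (hQ0 x) α
  funext x
  have hx : P x ^ α = (∑ x, P x ^ α) / (∑ x, Q x ^ α) * Q x ^ α := by
    rw [div_mul_comm, ← div_eq_iff hB.ne']
    exact congrFun h x
  rw [Pi.smul_apply, smul_eq_mul, ← Real.rpow_rpow_inv (hP0 x) hα, hx,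
    Real.mul_rpow (div_nonneg hB.le hA) (Real.rpow_nonneg (hQ0 x) α), Real.rpow_rpow_inv (hQ0 x) hα]

lemma escort_eq_escort_iff (hα : α ≠ 0) (hP0 : ∀ x, 0 ≤ P x) (hP : P ≠ 0) (hQ0 : ∀ x, 0 ≤ Q x)
    (hQ : Q ≠ 0) : escort α P = escort α Q ↔ SameRay ℝ P Q := by
  constructor
  · intro h
    rw [eq_rpow_inv_smul_of_escort_eq hα hP0 hQ0 hP h]
    exact SameRay.sameRay_pos_smul_left Q
      (Real.rpow_pos_of_pos (div_pos (sum_rpow_pos hP0 hP) (sum_rpow_pos hQ0 hQ)) _)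
  · intro h
    obtain ⟨c, d, hc, hd, hcd⟩ := h.exists_pos hP hQ
    rw [← escort_smul hc hP0, hcd, escort_smul hd hQ0]

lemma ofReal_escort_rpow (hα : 0 ≤ α) (hP0 : ∀ x, 0 ≤ P x) (hP : P ≠ 0) (t : ℝ) (x : X) :
    ENNReal.ofReal (escort α P x) ^ t =
      ENNReal.ofReal (P x) ^ (α * t) * ENNReal.ofReal (∑ y, P y ^ α) ^ (-t) := by
  have hB : ENNReal.ofReal (∑ y, P y ^ α) ≠ 0 := by simpa using sum_rpow_pos hP0 hP
  rw [escort, ENNReal.ofReal_div_of_pos (sum_rpow_pos hP0 hP),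
    ← ENNReal.ofReal_rpow_of_nonneg (hP0 x) hα, div_eq_mul_inv,
    ENNReal.mul_rpow_of_ne_top (ENNReal.rpow_ne_top_of_nonneg hα ENNReal.ofReal_ne_top)
      (ENNReal.inv_ne_top.2 hB), ENNReal.rpow_mul, ENNReal.inv_rpow, ENNReal.rpow_neg]

lemma hellingerSum_escort (hα : 0 < α) (hP0 : ∀ x, 0 ≤ P x) (hP : P ≠ 0) (hQ0 : ∀ x, 0 ≤ Q x)
    (hQ : Q ≠ 0) :
    hellingerSum α⁻¹ (escort α P) (escort α Q) =
      (∑ x, ENNReal.ofReal (P x) / ENNReal.ofReal (Q x) ^ (1 - α)) *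
        (ENNReal.ofReal (∑ x, P x ^ α) ^ (-α⁻¹) *
          ENNReal.ofReal (∑ x, Q x ^ α) ^ (α⁻¹ - 1)) := by
  rw [hellingerSum, Finset.sum_mul]
  refine Finset.sum_congr rfl fun x _ => ?_
  rw [ofReal_escort_rpow hα.le hP0 hP, ofReal_escort_rpow hα.le hQ0 hQ, mul_mul_mul_comm,
    mul_inv_cancel₀ hα.ne', ENNReal.rpow_one, mul_sub, mul_inv_cancel₀ hα.ne', mul_one,
    div_eq_mul_inv, ← ENNReal.rpow_neg, neg_sub, neg_sub]

end Escort

section Sundaresan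

variable {X : Type*} [Fintype X] {P Q : X → ℝ} {α : ℝ}

/-- The quantity whose base-2 logarithm is `sundaresan α P Q`, kept in `ℝ≥0∞` since it may be
infinite. -/
noncomputable def sundaresanRatio (α : ℝ) (P Q : X → ℝ) : ℝ≥0∞ :=
  ENNReal.ofReal (∑ y, Q y ^ α) *
    (∑ y, ENNReal.ofReal (P y) / ENNReal.ofReal (Q y) ^ (1 - α)) ^ (α / (1 - α)) /
    ENNReal.ofReal (∑ y, P y ^ α) ^ ((1 : ℝ) / (1 - α))

lemma sundaresanRatio_eq_hellingerSum_escort_rpow (hα : 0 < α) (hα1 : α ≠ 1)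
    (hP0 : ∀ x, 0 ≤ P x) (hP : P ≠ 0) (hQ0 : ∀ x, 0 ≤ Q x) (hQ : Q ≠ 0) :
    sundaresanRatio α P Q =
      hellingerSum α⁻¹ (escort α P) (escort α Q) ^ (α⁻¹ - 1)⁻¹ := by
  have h1α : 1 - α ≠ 0 := sub_ne_zero.2 hα1.symm
  have hr : (α⁻¹ - 1)⁻¹ = α / (1 - α) := by field_simp
  have hB : ENNReal.ofReal (∑ x, P x ^ α) ≠ 0 := by simpa using sum_rpow_pos hP0 hP
  have hA : ENNReal.ofReal (∑ x, Q x ^ α) ≠ 0 := by simpa using sum_rpow_pos hQ0 hQ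
  have scale_ne_zero : ENNReal.ofReal (∑ x, P x ^ α) ^ (-α⁻¹) *
      ENNReal.ofReal (∑ x, Q x ^ α) ^ (α⁻¹ - 1) ≠ 0 :=
    mul_ne_zero (by simp [ENNReal.rpow_eq_zero_iff, hB]) (by simp [ENNReal.rpow_eq_zero_iff, hA])
  have hB_pow := ENNReal.rpow_ne_top_of_ne_zero (y := -α⁻¹) hB ENNReal.ofReal_ne_top
  have hA_pow := ENNReal.rpow_ne_top_of_ne_zero (y := α⁻¹ - 1) hA ENNReal.ofReal_ne_top
  have hBexp : -α⁻¹ * (α / (1 - α)) = -(1 / (1 - α)) := by field_simp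
  have hAexp : (α⁻¹ - 1) * (α / (1 - α)) = 1 := by field_simp
  -- The sum over `x` may be `0` or `⊤` and the exponent negative, so the power distributes over the
  -- product only because the scale factor is neither `0` nor `⊤`.
  rw [hellingerSum_escort hα hP0 hP hQ0 hQ, hr, ENNReal.mul_rpow_eq_ite,
    if_neg (by simp [scale_ne_zero, ENNReal.mul_ne_top hB_pow hA_pow]),
    ENNReal.mul_rpow_of_ne_top hB_pow hA_pow,
    ← ENNReal.rpow_mul, ← ENNReal.rpow_mul, hBexp, hAexp, ENNReal.rpow_one, ENNReal.rpow_neg,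
    sundaresanRatio, div_eq_mul_inv]
  ring

lemma sundaresan_eq_ite_sundaresanRatio :
    sundaresan α P Q = if sundaresanRatio α P Q = ⊤ then ⊤
      else ((Real.logb 2 (sundaresanRatio α P Q).toReal : ℝ) : EReal) :=
  rfl

lemma sundaresan_eq_zero (h : sundaresanRatio α P Q = 1) : sundaresan α P Q = 0 := by
  rw [sundaresan_eq_ite_sundaresanRatio, h]
  simp

lemma sundaresan_pos (h : 1 < sundaresanRatio α P Q) : 0 < sundaresan α P Q := by
  rw [sundaresan_eq_ite_sundaresanRatio]
  split_ifs with htop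
  · exact EReal.zero_lt_top
  · have one_lt : 1 < (sundaresanRatio α P Q).toReal := by
      simpa using (ENNReal.toReal_lt_toReal ENNReal.one_ne_top htop).2 h
    exact EReal.coe_pos.2 (Real.logb_pos one_lt_two one_lt)

theorem sundaresan_nonneg_eq_zero_iff_general (hα : 0 < α) (hα1 : α ≠ 1) (hP0 : ∀ x, 0 ≤ P x)
    (hP : P ≠ 0) (hQ0 : ∀ x, 0 ≤ Q x) (hQ : Q ≠ 0) :
    0 ≤ sundaresan α P Q ∧ (sundaresan α P Q = 0 ↔ SameRay ℝ P Q) := by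
  have ratio_eq := sundaresanRatio_eq_hellingerSum_escort_rpow hα hα1 hP0 hP hQ0 hQ
  have escort_eq := escort_eq_escort_iff hα.ne' hP0 hP hQ0 hQ
  by_cases hPQ : SameRay ℝ P Q
  · have eq_zero : sundaresan α P Q = 0 := sundaresan_eq_zero <| by
      rw [ratio_eq, escort_eq.2 hPQ, hellingerSum_self (escort_nonneg hQ0), sum_escort hQ0 hQ,
        ENNReal.ofReal_one, ENNReal.one_rpow]
    exact ⟨eq_zero.ge, iff_of_true eq_zero hPQ⟩
  · have pos : 0 < sundaresan α P Q := sundaresan_pos <| by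
      rw [ratio_eq]
      exact one_lt_hellingerSum_rpow (inv_pos.2 hα) (inv_ne_one.2 hα1) (escort_nonneg hP0)
        (escort_nonneg hQ0) (sum_escort hP0 hP) (sum_escort hQ0 hQ) (mt escort_eq.1 hPQ)
    exact ⟨pos.le, iff_of_false pos.ne' hPQ⟩

end Sundaresan

/-- `Δ_α(P‖Q) ≥ 0`, with equality iff `P = Q`. -/
theorem sundaresan_nonneg_eq_zero_iff {X : Type*} [Fintype X]
    (P Q : X → ℝ) (hP0 : ∀ x, 0 ≤ P x) (hP1 : ∑ x, P x = 1)
    (hQ0 : ∀ x, 0 ≤ Q x) (hQ1 : ∑ x, Q x = 1)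
    (α : ℝ) (hα : 0 < α) (hα1 : α ≠ 1) :
    0 ≤ sundaresan α P Q ∧ (sundaresan α P Q = 0 ↔ P = Q) := by
  rw [← sameRay_iff_eq_of_sum_eq (hP1.trans hQ1.symm) (by simp [hQ1])]
  exact sundaresan_nonneg_eq_zero_iff_general hα hα1 hP0 (by rintro rfl; simp at hP1) hQ0
    (by rintro rfl; simp at hQ1)
end

section
/- Let P and Q be probability mass functions on a finite set 𝒳 and let α > 0 with α ≠ 1. Then Δ_α(P‖Q) = +∞ if and only if either (0 < α < 1 and supp(P) ⊄ supp(Q)) or (α > 1 and supp(P) ∩ supp(Q) = ∅), where supp denotes the support set {x ∈ 𝒳 : P(x) > 0} (respectively for Q). -/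
open scoped ENNReal

/-! For nonzero `P` and `Q`, the factors `∑ Q ^ α` and `(∑ P ^ α) ^ (1 / (1 - α))` are positive and
finite, so the divergence is infinite exactly when `S ^ (α / (1 - α))` is, for
`S = ∑ P / Q ^ (1 - α)`. The sign of `1 - α` decides when this happens. If `α < 1`, the outer
exponent is positive and `S` must be infinite, i.e. some summand has `P > 0` and `Q = 0`. If
`α > 1`, the outer exponent is negative and `S` must vanish, i.e. every summand, now equal to
`P * Q ^ (α - 1)`, is zero. -/

lemma sum_rpow_pos_s12 {ι : Type*} [Fintype ι] {f : ι → ℝ} (hf : 0 < f) (r : ℝ) :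
    0 < ∑ i, f i ^ r := by
  obtain ⟨hf_nonneg, i, hi⟩ := Pi.lt_def.mp hf
  exact Finset.sum_pos' (fun j _ => Real.rpow_nonneg (hf_nonneg j) r)
    ⟨i, Finset.mem_univ i, Real.rpow_pos_of_pos hi r⟩

section ENNReal

lemma ennreal_mul_div_eq_top_iff {a b c : ℝ≥0∞} (ha : a ≠ 0) (ha_top : a ≠ ∞) (hc : c ≠ 0)
    (hc_top : c ≠ ∞) : a * b / c = ∞ ↔ b = ∞ := by
  simp [ENNReal.div_eq_top, ENNReal.mul_eq_top, ha, ha_top, hc, hc_top]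

lemma ennreal_rpow_eq_top_iff_of_neg {a : ℝ≥0∞} {r : ℝ} (hr : r < 0) : a ^ r = ∞ ↔ a = 0 := by
  simp [ENNReal.rpow_eq_top_iff, hr, hr.not_gt]

variable {ι : Type*} {s : Finset ι} {p q : ι → ℝ≥0∞} {r : ℝ}

lemma sum_div_rpow_eq_top_iff_of_pos (hp : ∀ i ∈ s, p i ≠ ∞) (hr : 0 < r) :
    ∑ i ∈ s, p i / q i ^ r = ∞ ↔ ∃ i ∈ s, p i ≠ 0 ∧ q i = 0 := by
  rw [ENNReal.sum_eq_top]
  refine exists_congr fun i => and_congr_right fun hi => ?_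
  simp [ENNReal.div_eq_top, hp i hi, ENNReal.rpow_eq_zero_iff_of_pos hr]

lemma sum_div_rpow_eq_zero_iff_of_neg (hr : r < 0) :
    ∑ i ∈ s, p i / q i ^ r = 0 ↔ ∀ i ∈ s, p i = 0 ∨ q i = 0 := by
  simp only [Finset.sum_eq_zero_iff, ENNReal.div_eq_zero_iff, ennreal_rpow_eq_top_iff_of_neg hr]

end ENNReal

section Sundaresan

variable {X : Type*} [Fintype X] {P Q : X → ℝ} {α : ℝ}

lemma sundaresan_eq_top_iff_rpow_eq_top (hP : 0 < P) (hQ : 0 < Q) (α : ℝ) :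
    sundaresan α P Q = ⊤ ↔
      (∑ x, ENNReal.ofReal (P x) / ENNReal.ofReal (Q x) ^ (1 - α)) ^ (α / (1 - α)) = ∞ := by
  have hP_sum : ENNReal.ofReal (∑ x, P x ^ α) ≠ 0 :=
    (ENNReal.ofReal_pos.mpr (sum_rpow_pos_s12 hP α)).ne'
  have hQ_sum : ENNReal.ofReal (∑ x, Q x ^ α) ≠ 0 :=
    (ENNReal.ofReal_pos.mpr (sum_rpow_pos_s12 hQ α)).ne'
  simp only [sundaresan, ite_eq_left_iff, EReal.coe_ne_top, imp_false, not_not]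
  exact ennreal_mul_div_eq_top_iff hQ_sum ENNReal.ofReal_ne_top
    (ENNReal.rpow_pos (pos_iff_ne_zero.mpr hP_sum) ENNReal.ofReal_ne_top).ne'
    (ENNReal.rpow_ne_top_of_ne_zero hP_sum ENNReal.ofReal_ne_top)

lemma sundaresan_eq_top_iff_not_subset (hP : 0 < P) (hQ : 0 < Q) (hα : 0 < α) (hα1 : α < 1) :
    sundaresan α P Q = ⊤ ↔ ¬ {x | 0 < P x} ⊆ {x | 0 < Q x} := by
  have h_sub : 0 < 1 - α := sub_pos.mpr hα1
  rw [sundaresan_eq_top_iff_rpow_eq_top hP hQ,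
    ENNReal.rpow_eq_top_iff_of_pos (div_pos hα h_sub),
    sum_div_rpow_eq_top_iff_of_pos (fun _ _ => ENNReal.ofReal_ne_top) h_sub]
  simp

lemma sundaresan_eq_top_iff_inter_eq_empty (hP : 0 < P) (hQ : 0 < Q) (hα1 : 1 < α) :
    sundaresan α P Q = ⊤ ↔ {x | 0 < P x} ∩ {x | 0 < Q x} = ∅ := by
  have h_sub : 1 - α < 0 := sub_neg.mpr hα1
  rw [sundaresan_eq_top_iff_rpow_eq_top hP hQ,
    ennreal_rpow_eq_top_iff_of_neg (div_neg_of_pos_of_neg (one_pos.trans hα1) h_sub),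
    sum_div_rpow_eq_zero_iff_of_neg h_sub]
  simp [Set.eq_empty_iff_forall_notMem, or_iff_not_imp_left]

theorem sundaresan_eq_top_iff_general (hP : 0 < P) (hQ : 0 < Q) (hα : 0 < α) (hα1 : α ≠ 1) :
    sundaresan α P Q = ⊤ ↔
      ((α < 1 ∧ ¬ {x | 0 < P x} ⊆ {x | 0 < Q x}) ∨
        (1 < α ∧ {x | 0 < P x} ∩ {x | 0 < Q x} = ∅)) := by
  rcases hα1.lt_or_gt with h | h
  · simp only [h, h.not_gt, true_and, false_and, or_false,
      sundaresan_eq_top_iff_not_subset hP hQ hα h]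
  · simp only [h, h.not_gt, true_and, false_and, false_or,
      sundaresan_eq_top_iff_inter_eq_empty hP hQ h]

end Sundaresan

/-- `Δ_α(P‖Q) = ∞` iff (`0 < α < 1` and `supp(P) ⊄ supp(Q)`) or (`α > 1`
and `supp(P) ∩ supp(Q) = ∅`). -/
theorem sundaresan_eq_top_iff {X : Type*} [Fintype X]
    (P Q : X → ℝ) (hP0 : ∀ x, 0 ≤ P x) (hP1 : ∑ x, P x = 1)
    (hQ0 : ∀ x, 0 ≤ Q x) (hQ1 : ∑ x, Q x = 1)
    (α : ℝ) (hα : 0 < α) (hα1 : α ≠ 1) :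
    sundaresan α P Q = ⊤ ↔
      ((α < 1 ∧ ¬ {x : X | 0 < P x} ⊆ {x : X | 0 < Q x}) ∨
        (1 < α ∧ {x : X | 0 < P x} ∩ {x : X | 0 < Q x} = ∅)) :=
  sundaresan_eq_top_iff_general ((Fintype.sum_pos_iff_of_nonneg hP0).mp (hP1 ▸ one_pos))
    ((Fintype.sum_pos_iff_of_nonneg hQ0).mp (hQ1 ▸ one_pos)) hα hα1
end

section
/- Let P and Q be probability mass functions on a finite set 𝒳 with supp(P) ⊆ supp(Q). Then lim_{α→1} Δ_α(P‖Q) = D(P‖Q), where D(P‖Q) = Σ_{x: P(x)>0} P(x)·log₂(P(x)/Q(x)) is the Kullback–Leibler divergence. -/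
open scoped ENNReal
open Filter

/-!
Put `M_α(P, Q) = ∑ P Q^(α-1)`, so that `∑ P^α = M_α(P, P)`. Up to the term `log M_α(Q, Q)`, which is
continuous in `α`, the divergence `Δ_α(P‖Q)` is the difference quotient at `1` of
`α ↦ log M_α(P, P) - α log M_α(P, Q)`: both moments have the value `∑ P` at `α = 1`, so this
function vanishes there whatever the total mass of `P`. The limit is therefore
`log ∑ Q` plus its derivative at `1`, which is `∑ P log (P / Q) / ∑ P - log ∑ P`.
-/

section CrossMoment

variable {X : Type*} [Fintype X] {P Q : X → ℝ}

/-- The cross moment `∑ P Q^(α-1)` of weights `P` and `Q`, the sum through which `Δ_α(P‖Q)` couples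
`P` with `Q`. Where `P x = Q x = 0` the summand vanishes, in accordance with `0/0 = 0`; where only
`Q x = 0` and `α < 1`, the value is junk. -/
noncomputable def crossMoment (α : ℝ) (P Q : X → ℝ) : ℝ :=
  ∑ x, P x * Q x ^ (α - 1)

@[simp]
lemma crossMoment_one (P Q : X → ℝ) : crossMoment 1 P Q = ∑ x, P x := by
  simp [crossMoment]

lemma crossMoment_self (hP : 0 ≤ P) {α : ℝ} (hα : α ≠ 0) :
    crossMoment α P P = ∑ x, P x ^ α := by
  refine Finset.sum_congr rfl fun x _ => ?_
  rw [← Real.rpow_one_add' (hP x) (by simpa using hα), add_sub_cancel]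

lemma crossMoment_pos (hP : 0 ≤ P) (hP_ne : P ≠ 0) (hQ : 0 ≤ Q)
    (hPQ : Function.support P ⊆ Function.support Q) (α : ℝ) : 0 < crossMoment α P Q := by
  obtain ⟨x, hx⟩ := Function.ne_iff.1 hP_ne
  have hPx : 0 < P x := (hP x).lt_of_ne' hx
  have hQx : 0 < Q x := (hQ x).lt_of_ne' (hPQ hx)
  exact Finset.sum_pos' (fun y _ => mul_nonneg (hP y) (Real.rpow_nonneg (hQ y) _))
    ⟨x, Finset.mem_univ x, mul_pos hPx (Real.rpow_pos_of_pos hQx _)⟩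

lemma ofReal_crossMoment (hP : 0 ≤ P) (hQ : 0 ≤ Q)
    (hPQ : Function.support P ⊆ Function.support Q) (α : ℝ) :
    ENNReal.ofReal (crossMoment α P Q) =
      ∑ x, ENNReal.ofReal (P x) / ENNReal.ofReal (Q x) ^ (1 - α) := by
  rw [crossMoment, ENNReal.ofReal_sum_of_nonneg fun x _ =>
    mul_nonneg (hP x) (Real.rpow_nonneg (hQ x) _)]
  refine Finset.sum_congr rfl fun x _ => ?_
  rcases eq_or_ne (P x) 0 with hx | hx
  · simp [hx]
  · have hQx : 0 < Q x := (hQ x).lt_of_ne' (hPQ hx)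
    rw [ENNReal.ofReal_mul (hP x), ← ENNReal.ofReal_rpow_of_pos hQx, ← neg_sub 1 α,
      ENNReal.rpow_neg, div_eq_mul_inv]

lemma hasDerivAt_crossMoment (hQ : 0 ≤ Q) (hPQ : Function.support P ⊆ Function.support Q) (α : ℝ) :
    HasDerivAt (fun β => crossMoment β P Q) (∑ x, P x * (Q x ^ (α - 1) * Real.log (Q x))) α := by
  refine HasDerivAt.fun_sum fun x _ => ?_
  rcases eq_or_ne (P x) 0 with hx | hx
  · simpa [hx] using hasDerivAt_const α (0 : ℝ)
  · have hQx : 0 < Q x := (hQ x).lt_of_ne' (hPQ hx)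
    exact ((Real.hasStrictDerivAt_const_rpow hQx (α - 1)).hasDerivAt.comp_sub_const α 1).const_mul _

lemma hasDerivAt_logb_crossMoment_one (hP : 0 ≤ P) (hP_ne : P ≠ 0) (hQ : 0 ≤ Q)
    (hPQ : Function.support P ⊆ Function.support Q) (b : ℝ) :
    HasDerivAt (fun α => Real.logb b (crossMoment α P Q))
      ((∑ x, P x * Real.logb b (Q x)) / ∑ x, P x) 1 := by
  have hlog := ((hasDerivAt_crossMoment hQ hPQ 1).log
    (crossMoment_pos hP hP_ne hQ hPQ 1).ne').div_const (Real.log b)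
  refine hlog.congr_deriv ?_
  simp only [Real.logb, crossMoment_one, sub_self, Real.rpow_zero, one_mul, mul_div_assoc',
    ← Finset.sum_div]
  exact div_right_comm _ _ _

lemma sum_mul_logb_div (hPQ : Function.support P ⊆ Function.support Q) (b : ℝ) :
    ∑ x, P x * Real.logb b (P x / Q x) =
      ∑ x, P x * Real.logb b (P x) - ∑ x, P x * Real.logb b (Q x) := by
  rw [← Finset.sum_sub_distrib]
  refine Finset.sum_congr rfl fun x _ => ?_
  rcases eq_or_ne (P x) 0 with hx | hx
  · simp [hx]
  · rw [Real.logb_div hx (hPQ hx), mul_sub]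

lemma hasDerivAt_logb_crossMoment_self_sub_mul (hP : 0 ≤ P) (hP_ne : P ≠ 0) (hQ : 0 ≤ Q)
    (hPQ : Function.support P ⊆ Function.support Q) (b : ℝ) :
    HasDerivAt
      (fun α => Real.logb b (crossMoment α P P) - α * Real.logb b (crossMoment α P Q))
      ((∑ x, P x * Real.logb b (P x / Q x)) / ∑ x, P x - Real.logb b (∑ x, P x)) 1 := by
  have hself := hasDerivAt_logb_crossMoment_one hP hP_ne hP subset_rfl b
  have hcross := hasDerivAt_logb_crossMoment_one hP hP_ne hQ hPQ b
  refine (hself.sub ((hasDerivAt_id' (1 : ℝ)).mul hcross)).congr_deriv ?_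
  rw [sum_mul_logb_div hPQ, crossMoment_one]
  ring

lemma sundaresan_eq_logb_crossMoment (hP : 0 ≤ P) (hP_ne : P ≠ 0) (hQ : 0 ≤ Q)
    (hPQ : Function.support P ⊆ Function.support Q) {α : ℝ} (hα₀ : α ≠ 0) (hα₁ : α ≠ 1) :
    sundaresan α P Q =
      ((Real.logb 2 (crossMoment α Q Q) +
        (Real.logb 2 (crossMoment α P P) - α * Real.logb 2 (crossMoment α P Q)) / (α - 1) : ℝ) :
        EReal) := by
  have hQ_ne : Q ≠ 0 :=
    Function.support_nonempty_iff.1 ((Function.support_nonempty_iff.2 hP_ne).mono hPQ)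
  have hQQ_pos := crossMoment_pos hQ hQ_ne hQ subset_rfl α
  have hPP_pos := crossMoment_pos hP hP_ne hP subset_rfl α
  have hPQ_pos := crossMoment_pos hP hP_ne hQ hPQ α
  rw [sundaresan, ← crossMoment_self hQ hα₀, ← crossMoment_self hP hα₀,
    ← ofReal_crossMoment hP hQ hPQ, ENNReal.ofReal_rpow_of_pos hPQ_pos,
    ENNReal.ofReal_rpow_of_pos hPP_pos, ← ENNReal.ofReal_mul hQQ_pos.le,
    ← ENNReal.ofReal_div_of_pos (by positivity)]
  simp only [ENNReal.ofReal_ne_top, if_false]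
  rw [ENNReal.toReal_ofReal (by positivity), Real.logb_div (by positivity) (by positivity),
    Real.logb_mul (by positivity) (by positivity), Real.logb_rpow_eq_mul_logb_of_pos hPQ_pos,
    Real.logb_rpow_eq_mul_logb_of_pos hPP_pos]
  have hsub : α - 1 ≠ 0 := sub_ne_zero.2 hα₁
  congr 1
  field_simp
  ring

/-- The limit is the Kullback–Leibler divergence of the normalized weights `P / ∑ P` and
`Q / ∑ Q`. -/
theorem sundaresan_tendsto_kl_general (hP : 0 ≤ P) (hP_ne : P ≠ 0) (hQ : 0 ≤ Q)
    (hPQ : Function.support P ⊆ Function.support Q) :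
    Tendsto (fun α : ℝ => sundaresan α P Q) (nhdsWithin 1 {1}ᶜ)
      (nhds ((Real.logb 2 (∑ x, Q x) +
        ((∑ x, P x * Real.logb 2 (P x / Q x)) / ∑ x, P x - Real.logb 2 (∑ x, P x)) : ℝ) :
        EReal)) := by
  have hQ_ne : Q ≠ 0 :=
    Function.support_nonempty_iff.1 ((Function.support_nonempty_iff.2 hP_ne).mono hPQ)
  have hlogb_QQ : Tendsto (fun α => Real.logb 2 (crossMoment α Q Q)) (nhdsWithin 1 {1}ᶜ)
      (nhds (Real.logb 2 (∑ x, Q x))) := by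
    have hderiv := hasDerivAt_logb_crossMoment_one hQ hQ_ne hQ subset_rfl 2
    simpa using hderiv.continuousAt.tendsto.mono_left nhdsWithin_le_nhds
  have hslope := (hasDerivAt_logb_crossMoment_self_sub_mul hP hP_ne hQ hPQ 2).tendsto_slope
  refine ((continuous_coe_real_ereal.tendsto _).comp (hlogb_QQ.add hslope)).congr' ?_
  have hne_zero : ∀ᶠ α : ℝ in nhdsWithin 1 {1}ᶜ, α ≠ 0 :=
    nhdsWithin_le_nhds (isOpen_ne.mem_nhds one_ne_zero)
  filter_upwards [hne_zero, self_mem_nhdsWithin] with α hα₀ hα₁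
  simp [sundaresan_eq_logb_crossMoment hP hP_ne hQ hPQ hα₀ hα₁, slope_def_field]

end CrossMoment

/-- as `α → 1`, `Δ_α(P‖Q)` tends to the Kullback–Leibler divergence
`D(P‖Q) = ∑_{x : P(x)>0} P(x) log₂(P(x)/Q(x))` (note each summand with `P x = 0`
vanishes). -/
theorem sundaresan_tendsto_kl {X : Type*} [Fintype X]
    (P Q : X → ℝ) (hP0 : ∀ x, 0 ≤ P x) (hP1 : ∑ x, P x = 1)
    (hQ0 : ∀ x, 0 ≤ Q x) (hQ1 : ∑ x, Q x = 1)
    (hsupp : {x : X | 0 < P x} ⊆ {x : X | 0 < Q x}) :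
    Filter.Tendsto (fun α : ℝ => sundaresan α P Q) (nhdsWithin 1 {1}ᶜ)
      (nhds (((∑ x, P x * Real.logb 2 (P x / Q x) : ℝ) : EReal))) := by
  have hP_ne : P ≠ 0 := by
    rintro rfl
    simp at hP1
  have hPQ : Function.support P ⊆ Function.support Q :=
    fun x hx => (hsupp ((hP0 x).lt_of_ne' hx)).ne'
  simpa [hP1, hQ1] using sundaresan_tendsto_kl_general hP0 hP_ne hQ0 hPQ
end

section
/- Let P and Q be probability mass functions on a finite set 𝒳, and let 𝒬 = {x ∈ 𝒳 : Q(x) = max_{x'∈𝒳} Q(x')}. Then lim_{α→∞} Δ_α(P‖Q) = log₂( (max_{x∈𝒳} P(x)) / ( (1/|𝒬|) Σ_{x'∈𝒬} P(x') ) ). -/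
open scoped ENNReal
open Filter

/-!
For `α > 1` and any `M > 0`, moving the negative exponents across the fraction bar gives
`Δ_α(P‖Q) = log₂ ((∑ P ^ α) ^ (1 / (α - 1)) * (∑ Q ^ α / M ^ α) /
  (∑ P * Q ^ (α - 1) / M ^ (α - 1)) ^ (α / (α - 1)))`.
With `M = max Q`, the terms `(Q x / M) ^ α` tend to `1` on `𝒬` and to `0` elsewhere, so the second
factor counts `𝒬` and the denominator tends to `∑ x ∈ 𝒬, P x`. The first factor is, up to an
exponent tending to `1`, an `ℓ^α` norm of `P`, hence tends to `max P`. The numerator thus has a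
positive limit, and since `log₂` is continuous on `(0, ∞]` the limit may be taken inside it, whether
or not the denominator vanishes in the limit.
-/

/-- The logarithm to base `b` on `[0, ∞]`, with `log ∞ = ∞`. It lets the divergence be written as
the logarithm of an extended ratio. As for `Real.logb`, the value at `0` is the junk value `0`. -/
noncomputable def ennrealLogb (b : ℝ) (z : ℝ≥0∞) : EReal :=
  if z = ⊤ then ⊤ else (Real.logb b z.toReal : ℝ)

lemma ennrealLogb_ofReal_div_ofReal (b : ℝ) {x y : ℝ} (hx : 0 < x) (hy : 0 ≤ y) :
    ennrealLogb b (ENNReal.ofReal x / ENNReal.ofReal y) =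
      if y = 0 then ⊤ else ((Real.logb b (x / y) : ℝ) : EReal) := by
  rcases hy.eq_or_lt with rfl | hy
  · simp [ennrealLogb, ENNReal.div_zero, hx]
  · rw [← ENNReal.ofReal_div_of_pos hy, ennrealLogb, if_neg ENNReal.ofReal_ne_top,
      ENNReal.toReal_ofReal (by positivity), if_neg hy.ne']

lemma continuousAt_ennrealLogb_top {b : ℝ} (hb : 1 < b) : ContinuousAt (ennrealLogb b) ⊤ := by
  rw [ContinuousAt, show ennrealLogb b ⊤ = ⊤ from if_pos rfl, EReal.tendsto_nhds_top_iff_real]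
  intro c
  filter_upwards [lt_mem_nhds (ENNReal.ofReal_lt_top (r := b ^ c))] with z hz
  rw [ennrealLogb]
  split_ifs with hz_top
  · exact EReal.coe_lt_top c
  · have hbc : b ^ c < z.toReal := (ENNReal.ofReal_lt_iff_lt_toReal (by positivity) hz_top).1 hz
    have hz_pos : 0 < z.toReal := lt_of_le_of_lt (by positivity) hbc
    exact EReal.coe_lt_coe_iff.2 ((Real.lt_logb_iff_rpow_lt hb hz_pos).2 hbc)

lemma continuousAt_ennrealLogb {b : ℝ} (hb : 1 < b) {z : ℝ≥0∞} (hz : z ≠ 0) :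
    ContinuousAt (ennrealLogb b) z := by
  rcases eq_or_ne z ⊤ with rfl | hz_top
  · exact continuousAt_ennrealLogb_top hb
  · have hreal : ContinuousAt (fun t : ℝ≥0∞ => ((Real.logb b t.toReal : ℝ) : EReal)) z :=
      continuous_coe_real_ereal.continuousAt.comp <|
        (Real.continuousAt_logb (ENNReal.toReal_ne_zero.2 ⟨hz, hz_top⟩)).comp
          (ENNReal.continuousAt_toReal hz_top)
    refine hreal.congr ?_
    filter_upwards [isOpen_ne.mem_nhds hz_top] with t ht
    exact (if_neg ht).symm

lemma tendsto_ennrealLogb_ofReal_div_ofReal {β : Type*} {l : Filter β} {f g : β → ℝ} {b x y : ℝ}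
    (hb : 1 < b) (hf : Tendsto f l (nhds x)) (hg : Tendsto g l (nhds y)) (hx : 0 < x)
    (hy : 0 ≤ y) :
    Tendsto (fun t => ennrealLogb b (ENNReal.ofReal (f t) / ENNReal.ofReal (g t))) l
      (nhds (if y = 0 then ⊤ else ((Real.logb b (x / y) : ℝ) : EReal))) := by
  have hx' : ENNReal.ofReal x ≠ 0 := (ENNReal.ofReal_pos.2 hx).ne'
  have hratio : ENNReal.ofReal x / ENNReal.ofReal y ≠ 0 :=
    ENNReal.div_ne_zero.2 ⟨hx', ENNReal.ofReal_ne_top⟩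
  rw [← ennrealLogb_ofReal_div_ofReal b hx hy]
  exact (continuousAt_ennrealLogb hb hratio).tendsto.comp <|
    ENNReal.Tendsto.div (ENNReal.tendsto_ofReal hf) (Or.inl hx') (ENNReal.tendsto_ofReal hg)
      (Or.inl ENNReal.ofReal_ne_top)

lemma tendsto_one_div_sub_atTop (a : ℝ) : Tendsto (fun p : ℝ => 1 / (p - a)) atTop (nhds 0) := by
  simpa only [one_div, sub_eq_add_neg, Function.comp_def, id] using
    tendsto_inv_atTop_zero.comp (tendsto_atTop_add_const_right atTop (-a) tendsto_id)

lemma tendsto_div_sub_atTop (a : ℝ) : Tendsto (fun p : ℝ => p / (p - a)) atTop (nhds 1) := by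
  have h : Tendsto (fun p : ℝ => 1 + a * (1 / (p - a))) atTop (nhds 1) := by
    simpa using ((tendsto_one_div_sub_atTop a).const_mul a).const_add 1
  refine h.congr' ?_
  filter_upwards [eventually_gt_atTop a] with p hp
  have : p - a ≠ 0 := sub_ne_zero.2 hp.ne'
  field_simp
  ring

section PowerSums

variable {ι : Type*} {s : Finset ι} {f : ι → ℝ}

lemma tendsto_sum_mul_rpow_div_rpow_atTop (w : ι → ℝ) {M : ℝ} (hM : 0 < M)
    (hf0 : ∀ i ∈ s, 0 ≤ f i) (hfM : ∀ i ∈ s, f i ≤ M) :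
    Tendsto (fun p : ℝ => (∑ i ∈ s, w i * f i ^ p) / M ^ p) atTop
      (nhds (∑ i ∈ s with f i = M, w i)) := by
  simp_rw [Finset.sum_div, Finset.sum_filter]
  refine tendsto_finsetSum _ fun i hi => ?_
  have hterm (p : ℝ) : w i * f i ^ p / M ^ p = w i * (f i / M) ^ p := by
    rw [Real.div_rpow (hf0 i hi) hM.le, mul_div_assoc]
  simp_rw [hterm]
  split_ifs with h
  · simp [h, hM.ne']
  · have hlt : f i / M < 1 := (div_lt_one hM).2 ((hfM i hi).lt_of_ne h)
    have hgt : -1 < f i / M := neg_one_lt_zero.trans_le (div_nonneg (hf0 i hi) hM.le)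
    simpa using (tendsto_rpow_atTop_of_base_lt_one _ hgt hlt).const_mul (w i)

lemma sum_mul_rpow_nonneg {w : ι → ℝ} (hw : ∀ i ∈ s, 0 ≤ w i) (hf : ∀ i ∈ s, 0 ≤ f i) (p : ℝ) :
    0 ≤ ∑ i ∈ s, w i * f i ^ p :=
  Finset.sum_nonneg fun i hi => mul_nonneg (hw i hi) (Real.rpow_nonneg (hf i hi) p)

lemma sum_rpow_nonneg (hf : ∀ i ∈ s, 0 ≤ f i) (p : ℝ) : 0 ≤ ∑ i ∈ s, f i ^ p :=
  Finset.sum_nonneg fun i hi => Real.rpow_nonneg (hf i hi) p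

lemma sup'_rpow_le_sum_rpow (hs : s.Nonempty) (hf : ∀ i ∈ s, 0 ≤ f i) (p : ℝ) :
    s.sup' hs f ^ p ≤ ∑ i ∈ s, f i ^ p := by
  obtain ⟨j, hj, hmax⟩ := s.exists_mem_eq_sup' hs f
  rw [hmax]
  exact Finset.single_le_sum (f := fun i => f i ^ p) (fun i hi => Real.rpow_nonneg (hf i hi) p) hj

lemma sum_rpow_le_card_mul_sup'_rpow (hs : s.Nonempty) (hf : ∀ i ∈ s, 0 ≤ f i) {p : ℝ}
    (hp : 0 ≤ p) : ∑ i ∈ s, f i ^ p ≤ s.card * s.sup' hs f ^ p := by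
  rw [← nsmul_eq_mul]
  exact Finset.sum_le_card_nsmul _ _ _ fun i hi =>
    Real.rpow_le_rpow (hf i hi) (Finset.le_sup' f hi) hp

lemma tendsto_sum_rpow_rpow_one_div_sub_atTop (hs : s.Nonempty) (hf : ∀ i ∈ s, 0 ≤ f i) (a : ℝ) :
    Tendsto (fun p : ℝ => (∑ i ∈ s, f i ^ p) ^ (1 / (p - a))) atTop (nhds (s.sup' hs f)) := by
  set M := s.sup' hs f
  have hM : 0 ≤ M := hs.elim fun i hi => (hf i hi).trans (Finset.le_sup' f hi)
  have hlower : Tendsto (fun p : ℝ => M ^ (p / (p - a))) atTop (nhds M) := by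
    simpa using tendsto_const_nhds.rpow (tendsto_div_sub_atTop a) (Or.inr one_pos)
  have hcard : (s.card : ℝ) ≠ 0 := Nat.cast_ne_zero.2 hs.card_ne_zero
  have hupper : Tendsto (fun p : ℝ => (s.card : ℝ) ^ (1 / (p - a)) * M ^ (p / (p - a))) atTop
      (nhds M) := by
    simpa using
      (tendsto_const_nhds.rpow (tendsto_one_div_sub_atTop a) (Or.inl hcard)).mul hlower
  have hpow (p : ℝ) : (M ^ p) ^ (1 / (p - a)) = M ^ (p / (p - a)) := by
    rw [← Real.rpow_mul hM, mul_one_div]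
  refine tendsto_of_tendsto_of_tendsto_of_le_of_le' hlower hupper ?_ ?_ <;>
    filter_upwards [eventually_gt_atTop a, eventually_ge_atTop 0] with p hpa hp0
  · rw [← hpow]
    exact Real.rpow_le_rpow (by positivity) (sup'_rpow_le_sum_rpow hs hf p)
      (one_div_nonneg.2 (sub_pos.2 hpa).le)
  · rw [← hpow, ← Real.mul_rpow (by positivity) (by positivity)]
    exact Real.rpow_le_rpow (sum_rpow_nonneg hf p) (sum_rpow_le_card_mul_sup'_rpow hs hf hp0)
      (one_div_nonneg.2 (sub_pos.2 hpa).le)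

end PowerSums

/-- The set of points at which `f` attains its maximum; `maximizers Q` is the set `𝒬` of the
theorem. -/
noncomputable def maximizers {X : Type*} [Fintype X] [Nonempty X] (f : X → ℝ) : Finset X :=
  Finset.univ.filter fun x => f x = Finset.univ.sup' Finset.univ_nonempty f

section Maximizers

variable {X : Type*} [Fintype X] [Nonempty X] {f : X → ℝ}

lemma maximizers_nonempty (f : X → ℝ) : (maximizers f).Nonempty := by
  obtain ⟨x, hx, hmax⟩ := Finset.exists_mem_eq_sup' Finset.univ_nonempty f
  exact ⟨x, Finset.mem_filter.2 ⟨hx, hmax.symm⟩⟩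

lemma sup'_univ_pos_of_ne_zero (hf : ∀ x, 0 ≤ f x) (hne : f ≠ 0) :
    0 < Finset.univ.sup' Finset.univ_nonempty f := by
  obtain ⟨x, hx⟩ := Function.ne_iff.1 hne
  exact (Finset.lt_sup'_iff _).2 ⟨x, Finset.mem_univ x, (hf x).lt_of_ne' hx⟩

lemma tendsto_sum_mul_rpow_div_sup'_rpow_atTop (w : X → ℝ) (hf : ∀ x, 0 ≤ f x) (hne : f ≠ 0) :
    Tendsto (fun p : ℝ => (∑ x, w x * f x ^ p) / Finset.univ.sup' Finset.univ_nonempty f ^ p) atTop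
      (nhds (∑ x ∈ maximizers f, w x)) :=
  tendsto_sum_mul_rpow_div_rpow_atTop w (sup'_univ_pos_of_ne_zero hf hne) (fun x _ => hf x)
    fun _ hx => Finset.le_sup' f hx

end Maximizers

section Divergence

variable {X : Type*} [Fintype X] {P Q : X → ℝ}

lemma sum_ofReal_div_ofReal_rpow (hP : ∀ x, 0 ≤ P x) (hQ : ∀ x, 0 ≤ Q x) {α : ℝ} (hα : 1 ≤ α) :
    ∑ x, ENNReal.ofReal (P x) / ENNReal.ofReal (Q x) ^ (1 - α) =
      ENNReal.ofReal (∑ x, P x * Q x ^ (α - 1)) := by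
  rw [ENNReal.ofReal_sum_of_nonneg fun x _ => mul_nonneg (hP x) (Real.rpow_nonneg (hQ x) _)]
  refine Finset.sum_congr rfl fun x _ => ?_
  rw [ENNReal.ofReal_mul (hP x), ← ENNReal.ofReal_rpow_of_nonneg (hQ x) (sub_nonneg.2 hα),
    div_eq_mul_inv, ← ENNReal.rpow_neg, neg_sub]

lemma sundaresan_eq_ennrealLogb (hP : ∀ x, 0 ≤ P x) (hQ : ∀ x, 0 ≤ Q x) {α : ℝ} (hα : 1 < α) :
    sundaresan α P Q = ennrealLogb 2
      (ENNReal.ofReal ((∑ x, P x ^ α) ^ (1 / (α - 1)) * ∑ x, Q x ^ α) /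
        ENNReal.ofReal ((∑ x, P x * Q x ^ (α - 1)) ^ (α / (α - 1)))) := by
  have hα_sub : 0 ≤ α - 1 := sub_nonneg.2 hα.le
  have hPα : 0 ≤ ∑ x, P x ^ α := sum_rpow_nonneg (fun x _ => hP x) α
  have hPQ : 0 ≤ ∑ x, P x * Q x ^ (α - 1) :=
    sum_mul_rpow_nonneg (fun x _ => hP x) (fun x _ => hQ x) _
  have hexp (t : ℝ) : t / (1 - α) = -(t / (α - 1)) := by rw [← div_neg, neg_sub]
  change ennrealLogb 2 _ = _
  congr 1
  rw [sum_ofReal_div_ofReal_rpow hP hQ hα.le, hexp, hexp, ENNReal.rpow_neg, ENNReal.rpow_neg,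
    ENNReal.ofReal_rpow_of_nonneg hPQ (div_nonneg (by positivity) hα_sub),
    ENNReal.ofReal_rpow_of_nonneg hPα (one_div_nonneg.2 hα_sub),
    ENNReal.ofReal_mul (by positivity)]
  simp only [div_eq_mul_inv _ (ENNReal.ofReal _), div_eq_mul_inv _ (ENNReal.ofReal _)⁻¹, inv_inv]
  ring

lemma sundaresan_eq_ennrealLogb_rescaled (hP : ∀ x, 0 ≤ P x) (hQ : ∀ x, 0 ≤ Q x) {α : ℝ}
    (hα : 1 < α) {M : ℝ} (hM : 0 < M) :
    sundaresan α P Q = ennrealLogb 2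
      (ENNReal.ofReal ((∑ x, P x ^ α) ^ (1 / (α - 1)) * ((∑ x, Q x ^ α) / M ^ α)) /
        ENNReal.ofReal (((∑ x, P x * Q x ^ (α - 1)) / M ^ (α - 1)) ^ (α / (α - 1)))) := by
  have hPQ : 0 ≤ ∑ x, P x * Q x ^ (α - 1) :=
    sum_mul_rpow_nonneg (fun x _ => hP x) (fun x _ => hQ x) _
  have hMα : 0 < M ^ α := by positivity
  have hexp : (M ^ (α - 1)) ^ (α / (α - 1)) = M ^ α := by
    rw [← Real.rpow_mul hM.le, mul_div_cancel₀ _ (sub_ne_zero.2 hα.ne')]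
  rw [sundaresan_eq_ennrealLogb hP hQ hα, Real.div_rpow hPQ (by positivity), hexp, ← mul_div_assoc,
    ENNReal.ofReal_div_of_pos hMα, ENNReal.ofReal_div_of_pos hMα,
    div_eq_mul_inv _ (ENNReal.ofReal (M ^ α)), div_eq_mul_inv _ (ENNReal.ofReal (M ^ α)),
    ENNReal.mul_div_mul_right _ _ (ENNReal.inv_ne_zero.2 ENNReal.ofReal_ne_top)
      (ENNReal.inv_ne_top.2 (ENNReal.ofReal_pos.2 hMα).ne')]

lemma tendsto_sundaresan_numerator [Nonempty X] (hP : ∀ x, 0 ≤ P x) (hQ0 : ∀ x, 0 ≤ Q x)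
    (hQ : Q ≠ 0) :
    Tendsto (fun α : ℝ => (∑ x, P x ^ α) ^ (1 / (α - 1)) *
        ((∑ x, Q x ^ α) / Finset.univ.sup' Finset.univ_nonempty Q ^ α)) atTop
      (nhds (Finset.univ.sup' Finset.univ_nonempty P * (maximizers Q).card)) := by
  have hcount : Tendsto
      (fun α : ℝ => (∑ x, Q x ^ α) / Finset.univ.sup' Finset.univ_nonempty Q ^ α) atTop
      (nhds (maximizers Q).card) := by
    simpa using tendsto_sum_mul_rpow_div_sup'_rpow_atTop (fun _ => 1) hQ0 hQ
  exact (tendsto_sum_rpow_rpow_one_div_sub_atTop Finset.univ_nonempty (fun x _ => hP x) 1).mul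
    hcount

variable (P) in
lemma tendsto_sundaresan_denominator [Nonempty X] (hQ0 : ∀ x, 0 ≤ Q x) (hQ : Q ≠ 0) :
    Tendsto (fun α : ℝ => ((∑ x, P x * Q x ^ (α - 1)) /
        Finset.univ.sup' Finset.univ_nonempty Q ^ (α - 1)) ^ (α / (α - 1))) atTop
      (nhds (∑ x ∈ maximizers Q, P x)) := by
  have hshift : Tendsto (fun α : ℝ => α - 1) atTop atTop :=
    tendsto_atTop_add_const_right atTop (-1) tendsto_id
  have hsum := (tendsto_sum_mul_rpow_div_sup'_rpow_atTop P hQ0 hQ).comp hshift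
  simpa only [Real.rpow_one, Function.comp_def] using
    hsum.rpow (tendsto_div_sub_atTop 1) (Or.inr one_pos)

theorem sundaresan_tendsto_atTop_general [Nonempty X] (hP0 : ∀ x, 0 ≤ P x) (hP : P ≠ 0)
    (hQ0 : ∀ x, 0 ≤ Q x) (hQ : Q ≠ 0) :
    Tendsto (fun α : ℝ => sundaresan α P Q) atTop
      (nhds (if ∑ x ∈ maximizers Q, P x = 0 then (⊤ : EReal)
        else ((Real.logb 2 (Finset.univ.sup' Finset.univ_nonempty P /
          (((maximizers Q).card : ℝ)⁻¹ * ∑ x ∈ maximizers Q, P x)) : ℝ) : EReal))) := by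
  have hcard : (0 : ℝ) < (maximizers Q).card := Nat.cast_pos.2 (maximizers_nonempty Q).card_pos
  have hmax_mul_card := mul_pos (sup'_univ_pos_of_ne_zero hP0 hP) hcard
  have hsum : 0 ≤ ∑ x ∈ maximizers Q, P x := Finset.sum_nonneg fun x _ => hP0 x
  have hlim := tendsto_ennrealLogb_ofReal_div_ofReal one_lt_two
    (tendsto_sundaresan_numerator hP0 hQ0 hQ) (tendsto_sundaresan_denominator P hQ0 hQ)
    hmax_mul_card hsum
  rw [inv_mul_eq_div, div_div_eq_mul_div]
  refine hlim.congr' ?_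
  filter_upwards [eventually_gt_atTop 1] with α hα
  exact (sundaresan_eq_ennrealLogb_rescaled hP0 hQ0 hα (sup'_univ_pos_of_ne_zero hQ0 hQ)).symm

end Divergence

/-- as `α → ∞`, `Δ_α(P‖Q)` tends to
`log₂ ( max_x P(x) / ((1/|𝒬|) ∑_{x' ∈ 𝒬} P(x')) )`, where `𝒬` is the set of maximizers
of `Q`.  (The limit is `+∞` when `∑_{x' ∈ 𝒬} P(x') = 0`, in accordance with the
convention `a/0 = +∞` for `a > 0`.) -/
theorem sundaresan_tendsto_atTop {X : Type*} [Fintype X] [Nonempty X]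
    (P Q : X → ℝ) (hP0 : ∀ x, 0 ≤ P x) (hP1 : ∑ x, P x = 1)
    (hQ0 : ∀ x, 0 ≤ Q x) (hQ1 : ∑ x, Q x = 1) :
    Filter.Tendsto (fun α : ℝ => sundaresan α P Q) Filter.atTop
      (nhds
        (let 𝒬 : Finset X :=
          Finset.univ.filter fun x : X => Q x = Finset.univ.sup' Finset.univ_nonempty Q
        if (∑ x ∈ 𝒬, P x) = 0 then (⊤ : EReal)
        else ((Real.logb 2 ((Finset.univ.sup' Finset.univ_nonempty P) /
          ((𝒬.card : ℝ)⁻¹ * ∑ x ∈ 𝒬, P x)) : ℝ) : EReal))) :=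
  sundaresan_tendsto_atTop_general hP0 (by rintro rfl; simp at hP1) hQ0 (by rintro rfl; simp at hQ1)
end
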